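/- arXiv:2506.06246 — 3 statements merged into one kernel-verified Lean document; each statement's English description precedes it below -/
import Mathlib

section
/- Let p be a prime, k a perfect field of characteristic p, n ≥ 1, and W_n(k) the ring of p-typical Witt vectors of length n of k. Let A′ be a smooth W_n(k)-algebra and set A := A′/pA′ (a smooth k-algebra), with quotient map π : A′ → A. Then: (i) for x = (x₁,…,x_n) ∈ W_n(A), the element Σ_{i=0}^{n−1} pⁱ·(x̃_{i+1})^{p^{n−i}} of A′, where x̃_j ∈ A′ is any lift of x_j along π, does not depend on the chosen lifts, and the resulting map F̃ⁿ : W_n(A) → A′ is a ring homomorphism; (ii) F̃ⁿ is semilinear over the n-th iterate Φⁿ of the Witt-vector Frobenius of W_n(k), i.e. F̃ⁿ(c·x) = Φⁿ(c)·F̃ⁿ(x) for all c ∈ W_n(k) and x ∈ W_n(A); (iii) F̃ⁿ is injective; (iv) the image of F̃ⁿ equals the kernel of the universal derivation d : A′ → Ω¹_{A′/W_n(k)}. -/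
universe u v

/-- The functorial ring homomorphism `W_n(R) →+* W_n(S)` induced by a ring homomorphism
`f : R →+* S`; it acts coefficientwise. -/
noncomputable def twMap (p : ℕ) [Fact p.Prime] {R : Type u} {S : Type v} [CommRing R]
    [CommRing S] (n : ℕ) (f : R →+* S) :
    TruncatedWittVector p n R →+* TruncatedWittVector p n S :=
  (WittVector.truncate n).liftOfRightInverse TruncatedWittVector.out
    TruncatedWittVector.truncateFun_out
    ⟨(WittVector.truncate n).comp (WittVector.map f), fun x hx => by
      rw [WittVector.mem_ker_truncate] at hx
      rw [RingHom.mem_ker, RingHom.comp_apply, ← RingHom.mem_ker,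
        WittVector.mem_ker_truncate]
      intro i hi
      rw [WittVector.map_coeff, hx i hi, map_zero]⟩


namespace TF

section deriv
variable {p : ℕ} [hp : Fact p.Prime] {k A : Type*} [CommRing k] [CommRing A] [Algebra k A] [CharP A p]
  (D : Derivation k A A)

lemma d_pow (a : A) : D (a ^ p) = 0 := by
  rw [Derivation.leibniz_pow]
  simp

lemma iter_const {s : A} (hs : D s = 0) (m : ℕ) (y : A) : D^[m] (s * y) = s * D^[m] y := by
  induction m generalizing y with
  | zero => rfl
  | succ m ih =>
    rw [Function.iterate_succ_apply, Function.iterate_succ_apply, ← ih]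
    congr 1
    simp [hs]

lemma iter_zero (m : ℕ) : D^[m] 0 = 0 := by
  induction m with
  | zero => rfl
  | succ m ih => rw [Function.iterate_succ_apply, map_zero, ih]

lemma iter_add (m : ℕ) (x y : A) : D^[m] (x + y) = D^[m] x + D^[m] y := by
  induction m generalizing x y with
  | zero => rfl
  | succ m ih => rw [Function.iterate_succ_apply, map_add, ih]; rfl

lemma iter_slice {t : A} (ht : D t = 1) (m : ℕ) (y : A) :
    D^[m + 1] (t * y) = t * D^[m + 1] y + (m + 1 : ℕ) * D^[m] y := by
  induction m with
  | zero => simp [ht]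
  | succ m ih =>
    rw [Function.iterate_succ_apply', ih, Function.iterate_succ_apply' _ (m + 1)]
    simp only [map_add, Derivation.leibniz, ht, smul_eq_mul, Derivation.map_natCast,
      ← Function.iterate_succ_apply' D]
    push_cast
    ring

lemma iter_slice_pow {t : A} (ht : D t = 1) (m a : ℕ) :
    D^[m] (t ^ (a + m)) = ((a + m).descFactorial m : ℕ) * t ^ a := by
  induction m with
  | zero => simp
  | succ m ih =>
    have : D (t ^ (a + (m + 1))) = ((a + m + 1 : ℕ) : A) * t ^ (a + m) := by
      rw [Derivation.leibniz_pow]; simp [ht, add_assoc]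
    rw [Function.iterate_succ_apply, this, iter_const _ (Derivation.map_natCast _ _), ih,
      ← add_assoc, Nat.succ_descFactorial_succ]
    push_cast; ring

lemma wilson : (((p - 1).factorial : ℕ) : A) = -1 := by
  have h := ZMod.wilsons_lemma p
  have := congrArg (ZMod.castHom (dvd_refl p) A) h
  rwa [map_natCast, map_neg, map_one] at this

/-- projection formula on monomials -/
lemma iter_slice_top {t : A} (ht : D t = 1) (a : ℕ) :
    D^[p - 1] (t ^ (p - 1) * t ^ a) = if p ∣ a then - t ^ a else 0 := by
  rw [← pow_add, add_comm, iter_slice_pow D ht]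
  have hp1 := hp.out.pos
  split_ifs with h
  · obtain ⟨b, rfl⟩ := h
    have : (((p * b + (p - 1)).descFactorial (p - 1) : ℕ) : A) = -1 := by
      rw [← wilson (p := p), CharP.cast_eq_iff_mod_eq A p] 
      rw [Nat.add_descFactorial_eq_ascFactorial, ← Nat.one_ascFactorial]
      rw [Nat.ascFactorial_eq_prod_range, Nat.ascFactorial_eq_prod_range]
      change _ ≡ _ [MOD p]
      apply Nat.ModEq.prod
      intro i _
      unfold Nat.ModEq
      rw [show p * b + 1 + i = 1 + i + p * b by ring, Nat.add_mul_mod_self_left]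
    rw [this]; ring
  · have : p ∣ (a + (p - 1)).descFactorial (p - 1) := by
      rw [Nat.add_descFactorial_eq_ascFactorial, Nat.ascFactorial_eq_prod_range]
      have hlt := Nat.mod_lt a hp1
      have h0 : a % p ≠ 0 := fun h' => h (Nat.dvd_of_mod_eq_zero h')
      have : p ∣ a + 1 + (p - 1 - a % p) := by
        refine ⟨a / p + 1, ?_⟩
        have := Nat.div_add_mod a p
        rw [mul_add, mul_one]; omega
      exact this.trans (Finset.dvd_prod_of_mem (fun i => a + 1 + i)
        (Finset.mem_range.2 (by omega)))
    rw [(CharP.cast_eq_zero_iff A p _).2 this, zero_mul]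


/-- `(x+y)^(p-1) d(x+y) = x^(p-1) dx + y^(p-1) dy + dr`. -/
lemma exists_exact (x y : A) : ∃ r : A,
    (x + y) ^ (p - 1) * D (x + y) = x ^ (p - 1) * D x + y ^ (p - 1) * D y + D r := by
  obtain ⟨r, hr⟩ := exists_add_pow_prime_eq hp.out
    (MvPolynomial.X 0 : MvPolynomial (Fin 2) ℤ) (MvPolynomial.X 1)
  rw [mul_assoc, mul_assoc] at hr
  generalize (MvPolynomial.X 0 : MvPolynomial (Fin 2) ℤ) * (MvPolynomial.X 1 * r) = r at hr
  have hpz : (p : MvPolynomial (Fin 2) ℤ) ≠ 0 := Nat.cast_ne_zero.2 hp.out.ne_zero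
  have h0 := congrArg (MvPolynomial.pderiv (0 : Fin 2)) hr
  have h1 := congrArg (MvPolynomial.pderiv (1 : Fin 2)) hr
  simp only [map_add, Derivation.leibniz_pow, Derivation.leibniz, Derivation.map_natCast,
    MvPolynomial.pderiv_X, Pi.single_apply, smul_eq_mul, nsmul_eq_mul] at h0 h1
  norm_num at h0 h1
  rw [← mul_add] at h0 h1
  replace h0 := mul_left_cancel₀ hpz h0
  replace h1 := mul_left_cancel₀ hpz h1
  let φ : MvPolynomial (Fin 2) ℤ →ₐ[ℤ] A := MvPolynomial.aeval ![x, y]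
  have hφ0 : φ (MvPolynomial.X 0) = x := by simp [φ]
  have hφ1 : φ (MvPolynomial.X 1) = y := by simp [φ]
  have chain : ∀ q, D (φ q) = φ (MvPolynomial.pderiv 0 q) * D x +
      φ (MvPolynomial.pderiv 1 q) * D y := by
    intro q
    induction q using MvPolynomial.induction_on with
    | C a => simp [φ]
    | add a b ha hb => simp only [map_add, ha, hb]; ring
    | mul_X a i ha =>
      rw [map_mul, Derivation.leibniz, ha]
      fin_cases i <;> simp [MvPolynomial.pderiv_X, hφ0, hφ1] <;> ring
  refine ⟨φ r, ?_⟩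
  have g0 := congrArg φ h0
  have g1 := congrArg φ h1
  simp only [map_add, map_pow, hφ0, hφ1] at g0 g1
  rw [chain, map_add]
  linear_combination D x * g0 + D y * g1

/-- Katz's identity for a derivation -/
lemma psi_add (hD : ∀ y, D^[p] y = 0) {x y : A}
    (hx : D^[p - 1] (x ^ (p - 1) * D x) = - (D x) ^ p)
    (hy : D^[p - 1] (y ^ (p - 1) * D y) = - (D y) ^ p) :
    D^[p - 1] ((x + y) ^ (p - 1) * D (x + y)) = - (D (x + y)) ^ p := by
  obtain ⟨r, hr⟩ := exists_exact (p := p) D x y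
  rw [hr, iter_add, iter_add, hx, hy, ← Function.iterate_succ_apply D,
    Nat.succ_eq_add_one, Nat.sub_add_cancel hp.out.pos, hD, map_add, add_pow_char]
  ring

lemma psi_mul {x y : A}
    (hx : D^[p - 1] (x ^ (p - 1) * D x) = - (D x) ^ p)
    (hy : D^[p - 1] (y ^ (p - 1) * D y) = - (D y) ^ p) :
    D^[p - 1] ((x * y) ^ (p - 1) * D (x * y)) = - (D (x * y)) ^ p := by
  have e : (x * y) ^ (p - 1) * D (x * y) =
      x ^ p * (y ^ (p - 1) * D y) + y ^ p * (x ^ (p - 1) * D x) := by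
    obtain ⟨q, hq⟩ : ∃ q, p = q + 1 := ⟨p - 1, (Nat.sub_add_cancel hp.out.pos).symm⟩
    rw [Derivation.leibniz, hq]
    simp only [smul_eq_mul, Nat.add_sub_cancel]
    ring
  rw [e, iter_add, iter_const D (d_pow D x), iter_const D (d_pow D y), hx, hy, Derivation.leibniz,
    add_pow_char]
  simp only [smul_eq_mul]
  ring

lemma psi_const {x : A} (hx : D x = 0) :
    D^[p - 1] (x ^ (p - 1) * D x) = - (D x) ^ p := by
  rw [hx, mul_zero, iter_zero, zero_pow hp.out.ne_zero, neg_zero]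

lemma psi_slice {x : A} (hx : D x = 1) :
    D^[p - 1] (x ^ (p - 1) * D x) = - (D x) ^ p := by
  rw [hx]
  simpa using iter_slice_top (p := p) D hx 0

end deriv

section coords
variable {p : ℕ} [hp : Fact p.Prime] {k A : Type*} [CommRing k] [CommRing A] [Algebra k A] [CharP A p]
  {d : ℕ} (t : Fin d → A) (D : Fin d → Derivation k A A)
  (hDt : ∀ i j, D j (t i) = if i = j then 1 else 0)
  (hgen : ∀ P : A → Prop, (P 0) → (∀ x y, P x → P y → P (x + y)) →
    (∀ (c : A), P (c ^ p)) → (∀ i x, P x → P (t i * x)) → ∀ x, P x)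

include hDt hgen in
lemma iter_p (j : Fin d) (y : A) : (D j)^[p] y = 0 := by
  refine hgen (fun y => (D j)^[p] y = 0) (iter_zero _ _) ?_ ?_ ?_ y
  · intro x y hx hy
    rw [iter_add, hx, hy, add_zero]
  · intro c
    rw [← mul_one (c ^ p), iter_const _ (d_pow _ _)]
    rw [← Nat.sub_add_cancel hp.out.pos, Function.iterate_succ_apply]
    simp [iter_zero]
  · intro i x hx
    by_cases h : i = j
    · have := hDt i j
      rw [if_pos h] at this
      have e := iter_slice (D j) this (p - 1) x
      rw [Nat.sub_add_cancel hp.out.pos] at e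
      rw [e, hx]; simp
    · have := hDt i j
      rw [if_neg h] at this
      rw [iter_const _ this, hx, mul_zero]

include hDt hgen in
lemma psi (j : Fin d) (y : A) :
    (D j)^[p - 1] (y ^ (p - 1) * D j y) = - (D j y) ^ p := by
  refine hgen (fun y => (D j)^[p - 1] (y ^ (p - 1) * D j y) = - (D j y) ^ p) ?_ ?_ ?_ ?_ y
  · exact psi_const _ (map_zero _)
  · intro x y hx hy
    exact psi_add _ (iter_p t D hDt hgen j) hx hy
  · intro c
    exact psi_const _ (d_pow _ _)
  · intro i x hx
    refine psi_mul _ ?_ hx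
    have := hDt i j
    split_ifs at this
    · exact psi_slice _ this
    · exact psi_const _ this

/-- sums of monomials whose exponents in `J` are divisible by `p`. -/
def SJ (p : ℕ) (t : Fin d → A) (J : Finset (Fin d)) : AddSubgroup A :=
  AddSubgroup.closure {z | ∃ (α : Fin d → ℕ) (c : A), (∀ j ∈ J, p ∣ α j) ∧ z = (∏ i, t i ^ α i) * c ^ p}

omit hp [CharP A p] in
include hgen in
lemma mem_SJ_empty (y : A) : y ∈ SJ p t ∅ := by
  refine hgen (fun y => y ∈ SJ p t ∅) (zero_mem _) (fun _ _ => add_mem) ?_ ?_ y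
  · intro c
    exact AddSubgroup.subset_closure ⟨0, c, by simp, by simp⟩
  · intro i x hx
    beta_reduce at *
    induction hx using AddSubgroup.closure_induction with
    | mem x hx =>
      obtain ⟨α, c, -, rfl⟩ := hx
      refine AddSubgroup.subset_closure ⟨α + Pi.single i 1, c, by simp, ?_⟩
      have e : ∏ x, t x ^ (Pi.single i 1 : Fin d → ℕ) x = t i := by
        rw [Finset.prod_eq_single i] <;> simp +contextual [Pi.single_apply]
      simp only [Pi.add_apply, pow_add, Finset.prod_mul_distrib, e]
      ring
    | zero => simp
    | add x y _ _ hx hy => rw [mul_add]; exact add_mem hx hy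
    | neg x _ hx => rw [mul_neg]; exact neg_mem hx

include hDt in
lemma SJ_step (J : Finset (Fin d)) (j : Fin d) (y : A) (hy : y ∈ SJ p t J) :
    (D j)^[p - 1] (t j ^ (p - 1) * y) ∈ SJ p t (insert j J) := by
  induction hy using AddSubgroup.closure_induction with
  | mem x hx =>
    obtain ⟨α, c, hα, rfl⟩ := hx
    have h0 : D j ((∏ i ∈ Finset.univ.erase j, t i ^ α i) * c ^ p) = 0 := by
      have : D j (∏ i ∈ Finset.univ.erase j, t i ^ α i) = 0 := by
        generalize hs : Finset.univ.erase j = s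
        have hs' : j ∉ s := by rw [← hs]; simp
        clear hs
        induction s using Finset.induction_on with
        | empty => simp
        | insert a s ha ih =>
          rw [Finset.prod_insert ha, Derivation.leibniz, ih (fun h => hs' (by simp [h])),
            Derivation.leibniz_pow, hDt, if_neg (by rintro rfl; simp at hs')]
          simp
      rw [Derivation.leibniz, this, d_pow]; simp
    have e : t j ^ (p - 1) * ((∏ i, t i ^ α i) * c ^ p) =
      ((∏ i ∈ Finset.univ.erase j, t i ^ α i) * c ^ p) * (t j ^ (p - 1) * t j ^ α j) := by
      rw [← Finset.mul_prod_erase _ _ (Finset.mem_univ j)]; ring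
    have ht : D j (t j) = 1 := by simp [hDt]
    rw [e, iter_const _ h0, iter_slice_top (D j) ht]
    split_ifs with h
    · rw [mul_neg, mul_right_comm, mul_comm (Finset.prod _ _),
        Finset.mul_prod_erase _ (fun i => t i ^ α i) (Finset.mem_univ j)]
      refine neg_mem (AddSubgroup.subset_closure ⟨α, c, ?_, rfl⟩)
      intro i hi
      rcases Finset.mem_insert.1 hi with rfl | hi
      · exact h
      · exact hα _ hi
    · simp
  | zero => simp [iter_zero]
  | add x y _ _ hx hy => rw [mul_add, iter_add]; exact add_mem hx hy
  | neg x _ hx =>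
    have h1 : D j (-1) = 0 := by simp
    rw [mul_neg, ← neg_one_mul, iter_const _ h1, neg_one_mul]; exact neg_mem hx

include hDt hgen in
lemma exists_pth_root (y : A) (hy : ∀ j, D j y = 0) : ∃ v, v ^ p = y := by
  have key : ∀ J : Finset (Fin d), y ∈ SJ p t J := by
    intro J
    induction J using Finset.induction_on with
    | empty => exact mem_SJ_empty t hgen y
    | insert j J _ ih =>
      have := SJ_step t D hDt J j y ih
      have ht : D j (t j) = 1 := by simp [hDt]
      have h0 := iter_slice_top (p := p) (D j) ht 0
      simp at h0
      rw [mul_comm, iter_const _ (hy j), h0, mul_neg_one] at this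
      simpa using neg_mem this
  have := key Finset.univ
  clear key hy
  induction this using AddSubgroup.closure_induction with
  | mem x hx =>
    obtain ⟨α, c, hα, rfl⟩ := hx
    refine ⟨(∏ i, t i ^ (α i / p)) * c, ?_⟩
    rw [mul_pow, ← Finset.prod_pow]
    congr 1
    refine Finset.prod_congr rfl fun i _ => ?_
    rw [← pow_mul, Nat.div_mul_cancel (hα i (Finset.mem_univ i))]
  | zero => exact ⟨0, zero_pow hp.out.ne_zero⟩
  | add x y _ _ hx hy =>
    obtain ⟨a, rfl⟩ := hx
    obtain ⟨b, rfl⟩ := hy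
    exact ⟨a + b, add_pow_char _ _ _⟩
  | neg x _ hx =>
    obtain ⟨a, rfl⟩ := hx
    refine ⟨-a, ?_⟩
    have := sub_pow_char (p := p) (0 : A) a
    simpa [zero_pow hp.out.ne_zero] using this

include hDt hgen in
lemma cartier_D (hred : ∀ x : A, x ^ p = 0 → x = 0) (j : Fin d) (m : ℕ) (y : ℕ → A)
    (h : ∑ i ∈ Finset.range (m + 1), y i ^ (p ^ (m - i) - 1) * D j (y i) = 0) :
    ∀ i ≤ m, D j (y i) = 0 := by
  induction m with
  | zero =>
    intro i hi
    obtain rfl : i = 0 := by omega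
    simpa using h
  | succ m ih =>
    have h1 : ∑ i ∈ Finset.range (m + 1), y i ^ (p ^ (m - i) - 1) * D j (y i) = 0 := by
      apply hred
      rw [sum_pow_char]
      have := congrArg (D j)^[p - 1] h
      rw [Finset.sum_range_succ, iter_add, iter_zero] at this
      simp only [Nat.sub_self, pow_zero, one_mul] at this
      rw [← Function.iterate_succ_apply (D j), Nat.succ_eq_add_one,
        Nat.sub_add_cancel hp.out.pos, iter_p t D hDt hgen, add_zero] at this
      rw [← neg_eq_zero, ← this]
      have hsum : ∀ s : Finset ℕ, ∀ f : ℕ → A,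
          (D j)^[p - 1] (∑ i ∈ s, f i) = ∑ i ∈ s, (D j)^[p - 1] (f i) := by
        intro s f
        classical
        induction s using Finset.induction_on with
        | empty => simp [iter_zero]
        | insert a s ha ih => rw [Finset.sum_insert ha, Finset.sum_insert ha, iter_add, ih]
      rw [hsum, ← Finset.sum_neg_distrib]
      refine Finset.sum_congr rfl fun i hi => ?_
      have hi' : i ≤ m := by simpa [Nat.lt_succ_iff] using hi
      have e : y i ^ (p ^ (m + 1 - i) - 1) * D j (y i) =
          (y i ^ (p ^ (m - i) - 1)) ^ p * (y i ^ (p - 1) * D j (y i)) := by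
        rw [← mul_assoc, ← pow_mul, ← pow_add]
        congr 2
        rw [Nat.succ_sub hi', pow_succ]
        have a1 := Nat.one_le_pow (m - i) p hp.out.pos
        have a2 := hp.out.pos
        zify [a1, a2, Nat.mul_le_mul a1 a2, show 1 ≤ p ^ (m - i) * p from Nat.mul_le_mul a1 a2]
        ring
      rw [e, iter_const _ (d_pow _ _), psi t D hDt hgen, mul_pow]
      ring
    have h2 := ih h1
    intro i hi
    rcases Nat.lt_or_ge i (m + 1) with h' | h'
    · exact h2 i (by omega)
    · obtain rfl : i = m + 1 := by omega
      rw [Finset.sum_range_succ, Finset.sum_eq_zero] at h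
      · simpa using h
      · intro i hi
        rw [h2 i (by simpa [Nat.lt_succ_iff] using hi), mul_zero]

include hDt hgen in
lemma cartier_coords (hred : ∀ x : A, x ^ p = 0 → x = 0) (m : ℕ) (y : ℕ → A)
    (h : ∑ i ∈ Finset.range (m + 1), y i ^ (p ^ (m - i) - 1) • KaehlerDifferential.D k A (y i) = 0) :
    ∀ i ≤ m, ∃ v, v ^ p = y i := by
  intro i hi
  refine exists_pth_root t D hDt hgen _ fun j => ?_
  refine cartier_D t D hDt hgen hred j m y ?_ i hi
  have := congrArg (D j).liftKaehlerDifferential h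
  simpa using this

end coords
open TensorProduct

/-- If `A/B` is unramified of finite type and `a^p` comes from `B`, then `B → A` is surjective. -/
lemma surj_of_unram {p : ℕ} [hp : Fact p.Prime] {B A : Type*} [CommRing B] [CommRing A] [Algebra B A]
    [CharP A p] [Algebra.FormallyUnramified B A] [Algebra.FiniteType B A]
    (h : ∀ a : A, ∃ b : B, algebraMap B A b = a ^ p) :
    Function.Surjective (algebraMap B A) := by
  have : Algebra.IsIntegral B A := ⟨fun a => by
    obtain ⟨b, hb⟩ := h a
    refine IsIntegral.of_pow hp.out.pos ?_
    rw [← hb]; exact isIntegral_algebraMap⟩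
  have : Module.Finite B A := Algebra.IsIntegral.finite
  obtain ⟨t, ht, ht1⟩ := (Algebra.FormallyUnramified.iff_exists_tensorProduct (R := B) (S := A)).1
    inferInstance
  have hpT : ((p : ℕ) : A ⊗[B] A) = 0 := by
    have := map_natCast (algebraMap A (A ⊗[B] A)) p
    rw [CharP.cast_eq_zero, map_zero] at this
    exact this.symm
  have hI : KaehlerDifferential.ideal B A ≤ nilradical (A ⊗[B] A) := by
    rw [← KaehlerDifferential.span_range_eq_ideal, Ideal.span_le]
    rintro _ ⟨s, rfl⟩
    refine ⟨p, ?_⟩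
    obtain ⟨b, hb⟩ := h s
    obtain ⟨r, hr⟩ := exists_add_pow_prime_eq hp.out (1 ⊗ₜ[B] s - s ⊗ₜ[B] (1 : A)) (s ⊗ₜ[B] (1 : A))
    rw [sub_add_cancel, hpT, zero_mul, zero_mul, zero_mul, add_zero, Algebra.TensorProduct.tmul_pow,
      Algebra.TensorProduct.tmul_pow, one_pow, ← hb, Algebra.algebraMap_eq_smul_one,
      TensorProduct.smul_tmul] at hr
    simpa using hr
  have ht2 : 1 - t ∈ KaehlerDifferential.ideal B A := by
    simp [KaehlerDifferential.ideal, RingHom.mem_ker, ht1]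
  have hu : IsUnit t := by
    have := IsNilpotent.isUnit_one_sub (mem_nilradical.1 (hI ht2))
    simpa using this
  have hepi : Algebra.IsEpi B A := by
    rw [Algebra.isEpi_iff_forall_one_tmul_eq]
    intro a
    exact sub_eq_zero.1 (hu.mul_left_eq_zero.1 (ht a))
  exact (Algebra.isEpi_iff_surjective_algebraMap_of_finite).1 hepi

lemma reduced_of_etale {P A : Type*} [CommRing P] [IsDomain P] [CommRing A] [Algebra P A]
    [Algebra.Etale P A] : IsReduced A := by
  let K := FractionRing P
  have : IsReduced (K ⊗[P] A) := Algebra.FormallyUnramified.isReduced_of_field K _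
  have hinj : Function.Injective (Algebra.TensorProduct.includeRight : A →ₐ[P] K ⊗[P] A) :=
    Algebra.TensorProduct.includeRight_injective (IsFractionRing.injective P K)
  exact isReduced_of_injective (Algebra.TensorProduct.includeRight : A →ₐ[P] K ⊗[P] A) hinj


lemma cartier_etale {p : ℕ} [hp : Fact p.Prime] {k : Type*} [Field k] [CharP k p] [PerfectRing k p]
    {d : ℕ} {A : Type*} [CommRing A] [Algebra k A]
    (g : MvPolynomial (Fin d) k →ₐ[k] A) (hg : g.Etale) :
    (∀ x : A, x ^ p = 0 → x = 0) ∧ ∀ (m : ℕ) (y : ℕ → A),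
      (∑ i ∈ Finset.range (m + 1),
        y i ^ (p ^ (m - i) - 1) • KaehlerDifferential.D k A (y i) = 0) →
      ∀ i ≤ m, ∃ v, v ^ p = y i := by
  rcases subsingleton_or_nontrivial A with hA | hA
  · exact ⟨fun x _ => Subsingleton.elim _ _, fun m y _ i _ => ⟨0, Subsingleton.elim _ _⟩⟩
  have : CharP A p := charP_of_injective_algebraMap (algebraMap k A).injective p
  algebraize [g.toRingHom]
  let P := MvPolynomial (Fin d) k
  have : IsScalarTower k P A := IsScalarTower.of_algebraMap_eq' g.comp_algebraMap.symm
  have : Algebra.Etale P A := hg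
  have hred : IsReduced A := reduced_of_etale (P := P)
  have hred' : ∀ x : A, x ^ p = 0 → x = 0 := fun x hx => (IsNilpotent.eq_zero ⟨p, hx⟩)
  refine ⟨hred', ?_⟩
  -- generation
  have hsurj : ∀ a : A, a ∈ Algebra.adjoin P (Set.range fun x : A => x ^ p) := by
    let B := Algebra.adjoin P (Set.range fun x : A => x ^ p)
    have : Algebra.FormallyUnramified B A := Algebra.FormallyUnramified.of_restrictScalars P B A
    have : Algebra.FiniteType B A := Algebra.FiniteType.of_restrictScalars_finiteType P B A
    intro a
    obtain ⟨b, rfl⟩ := surj_of_unram (p := p) (B := B) (A := A)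
      (fun a => ⟨⟨a ^ p, Algebra.subset_adjoin ⟨a, rfl⟩⟩, rfl⟩) a
    exact b.2
  let t : Fin d → A := fun i => algebraMap P A (MvPolynomial.X i)
  have hgen : ∀ Q : A → Prop, (Q 0) → (∀ x y, Q x → Q y → Q (x + y)) →
    (∀ (c : A), Q (c ^ p)) → (∀ i x, Q x → Q (t i * x)) → ∀ x, Q x := by
    intro Q h0 hadd hpow ht x
    have hx := hsurj x
    have hS : (Set.range fun x : A => x ^ p) = (MonoidHom.mrange (powMonoidHom p : A →* A)) := by
      ext; simp
    rw [← Subalgebra.mem_toSubmodule, Algebra.adjoin_eq_span, hS, Submonoid.closure_eq] at hx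
    suffices h : ∀ f : P, Q (f • x) by simpa using h 1
    induction hx using Submodule.span_induction with
    | mem x hx =>
      obtain ⟨c, rfl⟩ := hx
      intro f
      induction f using MvPolynomial.induction_on with
      | C a =>
        obtain ⟨b, rfl⟩ := surjective_frobenius k p a
        have : (MvPolynomial.C (frobenius k p b) : P) • (powMonoidHom p : A →* A) c =
            (algebraMap k A b * c) ^ p := by
          rw [mul_pow, ← map_pow, Algebra.smul_def, ← MvPolynomial.algebraMap_eq,
            ← IsScalarTower.algebraMap_apply]
          rfl
        rw [this]
        exact hpow _
      | add a b ha hb => rw [add_smul]; exact hadd _ _ ha hb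
      | mul_X a i ha =>
        rw [mul_comm, mul_smul, Algebra.smul_def]
        exact ht i _ ha
    | zero => intro f; rwa [smul_zero]
    | add x y _ _ hx hy => intro f; rw [smul_add]; exact hadd _ _ (hx f) (hy f)
    | smul a x _ hx => intro f; rw [smul_smul]; exact hx _
  -- derivations
  have hD : ∀ j : Fin d, ∃ D : Derivation k A A, ∀ i, D (t i) = if i = j then 1 else 0 := by
    intro j
    let δ : Derivation k P P := MvPolynomial.pderiv j
    let l : Ω[A⁄k] →ₗ[A] A := (TensorProduct.AlgebraTensorModule.rid P A A).toLinearMap ∘ₗ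
      (LinearMap.baseChange A δ.liftKaehlerDifferential) ∘ₗ
      (KaehlerDifferential.tensorKaehlerEquivOfFormallyEtale k P A).symm.toLinearMap
    refine ⟨l.compDer (KaehlerDifferential.D k A), fun i => ?_⟩
    change l (KaehlerDifferential.D k A (algebraMap P A (MvPolynomial.X i))) = _
    simp [l, KaehlerDifferential.tensorKaehlerEquivOfFormallyEtale_symm_D_algebraMap, δ]
    have e : MvPolynomial.pderiv j (MvPolynomial.X i : MvPolynomial (Fin d) k) =
        if i = j then 1 else 0 := by
      rw [MvPolynomial.pderiv_X, Pi.single_apply]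
    rw [e]
    split_ifs
    · exact one_smul P (1 : A)
    · exact zero_smul P (1 : A)
  choose D hD using hD
  exact cartier_coords t D (fun i j => hD j i) hgen hred'

lemma cartier_std {p : ℕ} [hp : Fact p.Prime] {k : Type*} [Field k] [CharP k p] [PerfectRing k p]
    {A : Type*} [CommRing A] [Algebra k A] [h : Algebra.IsStandardSmooth k A] :
    (∀ x : A, x ^ p = 0 → x = 0) ∧ ∀ (m : ℕ) (y : ℕ → A),
      (∑ i ∈ Finset.range (m + 1),
        y i ^ (p ^ (m - i) - 1) • KaehlerDifferential.D k A (y i) = 0) →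
      ∀ i ≤ m, ∃ v, v ^ p = y i := by
  obtain ⟨_, _, _, _, ⟨P⟩⟩ := h
  have : Algebra.IsStandardSmoothOfRelativeDimension P.dimension k A := ⟨_, _, _, ‹_›, P, rfl⟩
  obtain ⟨g, hg⟩ :=
    Algebra.IsStandardSmoothOfRelativeDimension.exists_etale_mvPolynomial P.dimension k A
  exact cartier_etale g hg

lemma cartier_smooth {p : ℕ} [hp : Fact p.Prime] {k : Type*} [Field k] [CharP k p] [PerfectRing k p]
    {A : Type*} [CommRing A] [Algebra k A] [Algebra.Smooth k A] :
    (∀ x : A, x ^ p = 0 → x = 0) ∧ ∀ (m : ℕ) (y : ℕ → A),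
      (∑ i ∈ Finset.range (m + 1),
        y i ^ (p ^ (m - i) - 1) • KaehlerDifferential.D k A (y i) = 0) →
      ∀ i ≤ m, ∃ v, v ^ p = y i := by
  rcases subsingleton_or_nontrivial A with hA | hA
  · exact ⟨fun x _ => Subsingleton.elim _ _, fun m y _ i _ => ⟨0, Subsingleton.elim _ _⟩⟩
  have : CharP A p := charP_of_injective_algebraMap (algebraMap k A).injective p
  obtain ⟨s, hs, hstd⟩ := Algebra.Smooth.exists_span_eq_top_isStandardSmooth k A
  have top : ∀ J : Ideal A, (∀ g ∈ s, ∃ N : ℕ, g ^ N ∈ J) → (1 : A) ∈ J := by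
    intro J hJ
    rw [← Ideal.eq_top_iff_one, ← Ideal.radical_eq_top, eq_top_iff, ← hs, Ideal.span_le]
    exact fun g hg => hJ g hg
  constructor
  · intro x hx
    have := top (Ideal.span {x}).annihilator ?_
    · rw [Submodule.mem_annihilator] at this
      simpa using this x (Ideal.mem_span_singleton_self x)
    · intro g hg
      have := hstd g hg
      have h0 := (cartier_std (p := p) (k := k) (A := Localization.Away g)).1
        (algebraMap A _ x) (by rw [← map_pow, hx, map_zero])
      rw [IsLocalization.map_eq_zero_iff (Submonoid.powers g)] at h0
      obtain ⟨⟨_, N, rfl⟩, h0⟩ := h0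
      refine ⟨N, ?_⟩
      rw [Submodule.mem_annihilator]
      intro z hz
      obtain ⟨w, rfl⟩ := Ideal.mem_span_singleton'.1 hz
      simp only at h0
      rw [smul_eq_mul, mul_left_comm, h0, mul_zero]
  · intro m y hy i hi
    let J : Ideal A :=
      { carrier := {g | ∃ v, v ^ p = g ^ p * y i}
        zero_mem' := ⟨0, by simp [zero_pow hp.out.ne_zero]⟩
        add_mem' := by
          rintro a b ⟨v, hv⟩ ⟨w, hw⟩
          exact ⟨v + w, by rw [add_pow_char, add_pow_char, hv, hw, add_mul]⟩
        smul_mem' := by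
          rintro c a ⟨v, hv⟩
          exact ⟨c * v, by rw [mul_pow, hv, smul_eq_mul, mul_pow, mul_assoc]⟩ }
    have := top J ?_
    · obtain ⟨v, hv⟩ := this
      exact ⟨v, by simpa using hv⟩
    · intro g hg
      have := hstd g hg
      obtain ⟨v, hv⟩ := (cartier_std (p := p) (k := k) (A := Localization.Away g)).2 m
        (fun i => algebraMap A _ (y i)) (by
          have := congrArg (KaehlerDifferential.map k k A (Localization.Away g)) hy
          rw [map_sum, map_zero] at this
          rw [← this]
          refine Finset.sum_congr rfl fun i _ => ?_
          rw [LinearMap.map_smul, KaehlerDifferential.map_D, ← map_pow, algebraMap_smul]) i hi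
      obtain ⟨⟨b, ⟨_, N, rfl⟩⟩, hb⟩ := IsLocalization.surj (Submonoid.powers g) v
      simp only at hb
      have e : algebraMap A (Localization.Away g) (g ^ (N * p) * y i) = algebraMap A _ (b ^ p) := by
        rw [map_mul, ← hv, map_pow _ b, ← hb, mul_pow, map_pow, map_pow, ← pow_mul]
        ring
      obtain ⟨⟨_, M, rfl⟩, hM⟩ := (IsLocalization.eq_iff_exists (Submonoid.powers g) _).1 e
      refine ⟨M + N, g ^ M * b, ?_⟩
      simp only at hM
      obtain ⟨q, hq⟩ : ∃ q, p = q + 1 := ⟨p - 1, (Nat.sub_add_cancel hp.out.pos).symm⟩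
      calc (g ^ M * b) ^ p = g ^ (M * q) * (g ^ M * b ^ p) := by
            rw [mul_pow, hq]; ring
        _ = _ := by rw [← hM, hq]; ring

end TF

namespace TF
section Witt
variable {p : ℕ} [hp : Fact p.Prime]

lemma twMap_truncate {R S : Type*} [CommRing R] [CommRing S] (n : ℕ) (f : R →+* S)
    (x : WittVector p R) :
    twMap p n f (WittVector.truncate n x) = WittVector.truncate n (WittVector.map f x) := by
  exact RingHom.liftOfRightInverse_comp_apply (WittVector.truncate (p := p) (R := R) n)
    TruncatedWittVector.out TruncatedWittVector.truncateFun_out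
    ⟨(WittVector.truncate n).comp (WittVector.map f), _⟩ x

lemma twMap_coeff {R S : Type*} [CommRing R] [CommRing S] (n : ℕ) (f : R →+* S)
    (x : TruncatedWittVector p n R) (i : Fin n) :
    (twMap p n f x).coeff i = f (x.coeff i) := by
  obtain ⟨x, rfl⟩ := WittVector.truncate_surjective p n R x
  rw [twMap_truncate, WittVector.coeff_truncate, WittVector.coeff_truncate, WittVector.map_coeff]

/-- coefficient zero, as a ring homomorphism -/
noncomputable def eps (p : ℕ) [Fact p.Prime] (k : Type*) [CommRing k] (n : ℕ) (hn : 0 < n) :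
    TruncatedWittVector p n k →+* k :=
  (WittVector.truncate n).liftOfRightInverse TruncatedWittVector.out
    TruncatedWittVector.truncateFun_out
    ⟨WittVector.constantCoeff, fun x hx => by
      rw [WittVector.mem_ker_truncate] at hx
      exact hx 0 hn⟩

lemma eps_apply {k : Type*} [CommRing k] (n : ℕ) (hn : 0 < n) (c : TruncatedWittVector p n k) :
    eps p k n hn c = c.coeff ⟨0, hn⟩ := by
  obtain ⟨x, rfl⟩ := WittVector.truncate_surjective p n k c
  rw [WittVector.coeff_truncate]
  exact RingHom.liftOfRightInverse_comp_apply (WittVector.truncate (p := p) (R := k) n)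
    TruncatedWittVector.out TruncatedWittVector.truncateFun_out
    ⟨WittVector.constantCoeff, _⟩ x

variable {k : Type*} [Field k] [CharP k p] [PerfectRing k p]

omit [PerfectRing k p] in
lemma W_pow_eq_zero (n : ℕ) : (p : TruncatedWittVector p n k) ^ n = 0 := by
  have h : WittVector.truncate n ((p : WittVector p k) ^ n) = 0 := by
    rw [← RingHom.mem_ker, WittVector.mem_ker_truncate]
    intro i hi
    have := WittVector.mul_pow_charP_coeff_zero (1 : WittVector p k) hi
    simpa using this
  simpa using h

lemma W_tors {n m : ℕ} (hm : m < n) (a : TruncatedWittVector p n k)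
    (h : (p : TruncatedWittVector p n k) ^ m * a = 0) : ∃ b, a = p * b := by
  obtain ⟨x, rfl⟩ := WittVector.truncate_surjective p n k a
  have h' : WittVector.truncate n (x * (p : WittVector p k) ^ m) = 0 := by
    rw [map_mul, map_pow, map_natCast, mul_comm, h]
  rw [← RingHom.mem_ker, WittVector.mem_ker_truncate] at h'
  have h0 := h' m hm
  have := WittVector.mul_pow_charP_coeff_succ x (n := m) (m := 0)
  rw [zero_add, h0] at this
  have hx : x.coeff 0 = 0 := pow_eq_zero_iff (pow_ne_zero _ hp.out.ne_zero) |>.1 this.symm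
  have : x ∈ Ideal.span {(p : WittVector p k) ^ 1} := by
    rw [WittVector.mem_span_p_pow_iff_le_coeff_eq_zero]
    intro j hj
    obtain rfl : j = 0 := by omega
    exact hx
  rw [pow_one, Ideal.mem_span_singleton] at this
  obtain ⟨y, rfl⟩ := this
  exact ⟨WittVector.truncate n y, by simp⟩

lemma W_sum (n : ℕ) (c : TruncatedWittVector p n k) :
    ∑ i : Fin n, (p : TruncatedWittVector p n k) ^ (i : ℕ) *
      (WittVector.truncate n (WittVector.teichmuller p (c.coeff i))) ^ p ^ (n - (i : ℕ)) =
    twMap p n (iterateFrobenius k p n) c := by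
  obtain ⟨x, rfl⟩ := WittVector.truncate_surjective p n k c
  rw [twMap_truncate]
  set y := WittVector.map (iterateFrobenius k p n) x with hy
  have key : (p : WittVector p k) ^ n ∣ y - ∑ i ∈ Finset.range n, (p : WittVector p k) ^ i *
      (WittVector.teichmuller p (x.coeff i)) ^ p ^ (n - i) := by
    cases n with
    | zero => simp
    | succ n =>
      have := WittVector.dvd_sub_sum_teichmuller_iterateFrobeniusEquiv_coeff y n
      convert this using 2
      refine Finset.sum_congr (by ext; simp) fun i hi => ?_
      have hi' : i < n + 1 := by simpa [Nat.lt_succ_iff] using hi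
      rw [mul_comm, ← map_pow]
      congr 2
      rw [hy, WittVector.map_coeff, iterateFrobenius_def]
      have h1 : ∀ (i : ℕ) (u : k), ((_root_.frobeniusEquiv k p).symm ^ i) (u ^ p ^ i) = u := by
        intro i
        induction i with
        | zero => intro u; simp
        | succ i ih =>
          intro u
          rw [pow_succ (_root_.frobeniusEquiv k p).symm i, RingAut.mul_apply, pow_succ, pow_mul]
          have : (_root_.frobeniusEquiv k p).symm ((u ^ p ^ i) ^ p) = u ^ p ^ i := by
            rw [RingEquiv.symm_apply_eq, frobeniusEquiv_apply, frobenius_def]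
          rw [this, ih]
      conv_rhs => rw [show n + 1 = (n + 1 - i) + i by omega, pow_add, pow_mul, h1]
  obtain ⟨z, hz⟩ := key
  have := congrArg (WittVector.truncate n) hz
  rw [map_mul, map_pow, map_natCast, W_pow_eq_zero, zero_mul, map_sub, sub_eq_zero] at this
  rw [this, map_sum, Finset.sum_range]
  simp [WittVector.coeff_truncate]
end Witt
end TF

namespace TF
section Exist

lemma flat_tors {W M : Type*} [CommRing W] [AddCommGroup M] [Module W M] [Module.Flat W M]
    {q r : W} (hW : ∀ a : W, q * a = 0 → ∃ b, a = r * b) (x : M) (hx : q • x = 0) :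
    ∃ z : M, x = r • z := by
  have h := Module.Flat.isTrivialRelation_of_sum_smul_eq_zero (R := W) (ι := Fin 1)
    (f := fun _ => q) (x := fun _ => x) (by simpa using hx)
  obtain ⟨κ, a, y, hxy, ha⟩ := h
  have h2 : ∀ j, ∃ b, a 0 j = r * b := fun j => hW _ (by
    have := ha j
    simpa using this)
  choose b hb using h2
  refine ⟨∑ j, b j • y j, ?_⟩
  refine (hxy 0).trans ?_
  rw [Finset.smul_sum]
  exact Finset.sum_congr rfl fun j _ => by rw [hb, mul_smul]

lemma ghost_eq {p : ℕ} [hp : Fact p.Prime] {n : ℕ} {R : Type*} [CommRing R]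
    (hpn : (p : R) ^ n = 0) (w : WittVector p R) :
    WittVector.ghostComponent n w =
      ∑ i : Fin n, (p : R) ^ (i : ℕ) * w.coeff i ^ p ^ (n - (i : ℕ)) := by
  rw [WittVector.ghostComponent_apply, wittPolynomial_eq_sum_C_mul_X_pow, map_sum,
    Finset.sum_range_succ, Finset.sum_range]
  simp [hpn]

lemma exists_F {p : ℕ} [hp : Fact p.Prime] {n : ℕ} {A' A : Type*} [CommRing A'] [CommRing A]
    (hpn : (p : A') ^ n = 0) (π : A' →+* A) (hπ : Function.Surjective π)
    (hker : ∀ a, π a = 0 → (p : A') ∣ a) :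
    ∃ F : TruncatedWittVector p n A →+* A',
      ∀ (x : TruncatedWittVector p n A) (y : Fin n → A'), (∀ i, π (y i) = x.coeff i) →
          F x = ∑ i : Fin n, (p : A') ^ (i : ℕ) * y i ^ p ^ (n - (i : ℕ)) := by
  classical
  let q : WittVector p A' →+* TruncatedWittVector p n A :=
    (WittVector.truncate n).comp (WittVector.map π)
  have hqc : ∀ (w : WittVector p A') (i : Fin n), (q w).coeff i = π (w.coeff i) := by
    intro w i
    change TruncatedWittVector.coeff i (WittVector.truncate n (WittVector.map π w)) = _
    rw [WittVector.coeff_truncate, WittVector.map_coeff]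
  have hq : Function.Surjective q :=
    (WittVector.truncate_surjective p n A).comp (WittVector.map_surjective π hπ)
  have hk : RingHom.ker q ≤ RingHom.ker (WittVector.ghostComponent (p := p) (R := A') n) := by
    intro w hw
    rw [RingHom.mem_ker] at hw ⊢
    rw [ghost_eq hpn]
    refine Finset.sum_eq_zero fun i _ => ?_
    have h1 : π (w.coeff i) = 0 := by
      rw [← hqc, hw]
      simp
    obtain ⟨a, ha⟩ := hker _ h1
    have h2 : n ≤ (i : ℕ) + p ^ (n - (i : ℕ)) := by
      have := (Nat.lt_pow_self hp.out.one_lt (n := n - (i : ℕ))).le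
      omega
    rw [ha, mul_pow, ← mul_assoc, ← pow_add, pow_eq_zero_of_le h2 hpn, zero_mul]
  refine ⟨q.liftOfSurjective hq ⟨WittVector.ghostComponent n, hk⟩, fun x y hxy => ?_⟩
  let w : WittVector p A' := WittVector.mk p fun i => if h : i < n then y ⟨i, h⟩ else 0
  have hw : ∀ i : Fin n, w.coeff i = y i := fun i => by simp [w]
  have hx : q w = x := by
    ext i
    rw [hqc, hw, hxy]
  rw [← hx]
  have := RingHom.liftOfRightInverse_comp_apply q _ (Function.rightInverse_surjInv hq)
    ⟨WittVector.ghostComponent n, hk⟩ w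
  refine this.trans ?_
  change WittVector.ghostComponent n w = _
  rw [ghost_eq hpn]
  exact Finset.sum_congr rfl fun i _ => by rw [hw]
end Exist
end TF

namespace TF
open TensorProduct
attribute [local instance] Algebra.TensorProduct.rightAlgebra in
lemma reduction {p : ℕ} [Fact p.Prime] {k : Type*} [Field k] [CharP k p] [PerfectRing k p]
    {W A' A : Type*} [CommRing W] [CommRing A'] [CommRing A] [Algebra W A'] [Algebra.Smooth W A']
    (ε : W →+* k) (π : A' →+* A) (hπ : Function.Surjective π)
    (hker : ∀ a, π a = 0 ↔ (p : A') ∣ a)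
    (f : k →+* A) (hf : ∀ c, π (algebraMap W A' c) = f (ε c)) :
    (∀ x : A, x ^ p = 0 → x = 0) ∧ ∀ (m : ℕ) (y : ℕ → A') (η : Ω[A'⁄W]),
      (∑ i ∈ Finset.range (m + 1),
        y i ^ (p ^ (m - i) - 1) • KaehlerDifferential.D W A' (y i) = (p : A') • η) →
      ∀ i ≤ m, ∃ v w, y i = v ^ p + p * w := by
  let _ : Algebra W k := ε.toAlgebra
  let _ : Algebra W A := (f.comp ε).toAlgebra
  let f' : k →ₐ[W] A := { f with commutes' := fun c => rfl }
  let π' : A' →ₐ[W] A := { π with commutes' := fun c => hf c }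
  let ρ : k ⊗[W] A' →ₐ[W] A := Algebra.TensorProduct.lift f' π' fun _ _ => Commute.all _ _
  let j : A' →ₐ[W] k ⊗[W] A' := Algebra.TensorProduct.includeRight
  have hρ : ∀ a, ρ (j a) = π a := by
    intro a
    simp only [ρ, j, Algebra.TensorProduct.includeRight_apply, Algebra.TensorProduct.lift_tmul,
      map_one, one_mul]
    rfl
  have hp0 : (p : k ⊗[W] A') = 0 := by
    rw [← map_natCast (algebraMap k (k ⊗[W] A')), CharP.cast_eq_zero, map_zero]
  have hC := cartier_smooth (p := p) (k := k) (A := k ⊗[W] A')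
  constructor
  · intro x hx
    obtain ⟨a, rfl⟩ := hπ x
    rw [← map_pow, hker] at hx
    obtain ⟨b, hb⟩ := hx
    have : j a ^ p = 0 := by
      rw [← map_pow, hb, map_mul, map_natCast, hp0, zero_mul]
    rw [← hρ, hC.1 _ this, map_zero]
  · intro m y η h i hi
    have h1 := congrArg (KaehlerDifferential.map W k A' (k ⊗[W] A')) h
    rw [map_sum, map_smul] at h1
    have h2 : (p : A') • (KaehlerDifferential.map W k A' (k ⊗[W] A')) η = 0 := by
      rw [Nat.cast_smul_eq_nsmul A', ← Nat.cast_smul_eq_nsmul (k ⊗[W] A'), hp0, zero_smul]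
    rw [h2] at h1
    obtain ⟨v, hv⟩ := hC.2 m (fun i => j (y i)) (by
      rw [← h1]
      refine Finset.sum_congr rfl fun i _ => ?_
      rw [map_smul, KaehlerDifferential.map_D, ← algebraMap_smul (k ⊗[W] A') (y i ^ _), map_pow]
      rfl) i hi
    obtain ⟨v', hv'⟩ := hπ (ρ v)
    have : π (y i - v' ^ p) = 0 := by
      rw [map_sub, map_pow, hv', ← hρ, ← hv, map_pow, sub_self]
    obtain ⟨w, hw⟩ := (hker _).1 this
    exact ⟨v', w, by rw [← hw]; ring⟩
end TF

namespace TF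

lemma D_term {p : ℕ} {W A' : Type*} [CommRing W] [CommRing A'] [Algebra W A'] (i j : ℕ) (u : A') :
    KaehlerDifferential.D W A' ((p : A') ^ i * u ^ p ^ j) =
      (p : A') ^ (i + j) • (u ^ (p ^ j - 1) • KaehlerDifferential.D W A' u) := by
  have : (p : A') ^ i * u ^ p ^ j = (p ^ i : ℕ) • u ^ p ^ j := by
    rw [nsmul_eq_mul]; push_cast; rfl
  rw [this, map_nsmul, Derivation.leibniz_pow, ← mul_smul, ← pow_add,
    ← Nat.cast_smul_eq_nsmul A']
  push_cast
  rfl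

lemma descent {p : ℕ} [Fact p.Prime] {n : ℕ} {W A' : Type*} [CommRing W] [CommRing A']
    [Algebra W A']
    (hT : ∀ m < n, ∀ ω : Ω[A'⁄W], (p : A') ^ m • ω = 0 → ∃ z, ω = (p : A') • z)
    (hL : ∀ (m : ℕ) (y : ℕ → A') (η : Ω[A'⁄W]),
      (∑ i ∈ Finset.range (m + 1),
        y i ^ (p ^ (m - i) - 1) • KaehlerDifferential.D W A' (y i) = (p : A') • η) →
      ∀ i ≤ m, ∃ v w, y i = v ^ p + p * w) (z : A') :
    ∀ m ≤ n, (∃ η, KaehlerDifferential.D W A' z = (p : A') ^ m • η) →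
      ∃ (y : ℕ → A') (w : A'), z = ∑ i ∈ Finset.range m, (p : A') ^ i * y i ^ p ^ (m - i)
        + (p : A') ^ m * w := by
  intro m
  induction m with
  | zero => intro _ _; exact ⟨fun _ => 0, z, by simp⟩
  | succ m ih =>
    rintro hm ⟨η, hη⟩
    obtain ⟨y₀, w, hz₀⟩ := ih (by omega) ⟨(p : A') • η, by rw [hη, pow_succ, mul_smul]⟩
    let y := Function.update y₀ m w
    have hz : z = ∑ i ∈ Finset.range (m + 1), (p : A') ^ i * y i ^ p ^ (m - i) := by
      rw [hz₀, Finset.sum_range_succ]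
      congr 1
      · refine Finset.sum_congr rfl fun i hi => ?_
        have : i ≠ m := by have := Finset.mem_range.1 hi; omega
        simp [y, Function.update_of_ne this]
      · simp [y]
    have hD : (p : A') ^ m • (∑ i ∈ Finset.range (m + 1),
        y i ^ (p ^ (m - i) - 1) • KaehlerDifferential.D W A' (y i) - (p : A') • η) = 0 := by
      rw [smul_sub, sub_eq_zero, ← mul_smul, ← pow_succ, ← hη, hz, map_sum, Finset.smul_sum]
      refine Finset.sum_congr rfl fun i hi => ?_
      rw [D_term, show i + (m - i) = m by have := Finset.mem_range.1 hi; omega]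
    obtain ⟨ζ, hζ⟩ := hT m (by omega) _ hD
    have hl := hL m y (η + ζ) (by rw [smul_add, ← hζ]; abel)
    have hl' : ∀ i, ∃ v, i ≤ m → (p : A') ∣ y i - v ^ p := by
      intro i
      by_cases hi : i ≤ m
      · obtain ⟨v, w, h⟩ := hl i hi
        exact ⟨v, fun _ => ⟨w, by rw [h]; ring⟩⟩
      · exact ⟨0, fun h => absurd h hi⟩
    choose v hv using hl'
    have hd : (p : A') ^ (m + 1) ∣ z - ∑ i ∈ Finset.range (m + 1),
        (p : A') ^ i * v i ^ p ^ (m + 1 - i) := by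
      rw [hz, ← Finset.sum_sub_distrib]
      refine Finset.dvd_sum fun i hi => ?_
      have hi : i ≤ m := by have := Finset.mem_range.1 hi; omega
      obtain ⟨c, hc⟩ := dvd_sub_pow_of_dvd_sub (hv i hi) (m - i)
      refine ⟨c, ?_⟩
      rw [← mul_sub, show m + 1 - i = (m - i) + 1 by omega, pow_succ' p (m - i), pow_mul, hc,
        ← mul_assoc, ← pow_add]
      congr 2
      omega
    obtain ⟨c, hc⟩ := hd
    exact ⟨v, c, by rw [← hc]; ring⟩
end TF

/-- the map `F̃ⁿ` of Illusie–Raynaud, affine form.  Let `k` be a perfect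
field of characteristic `p`, `n ≥ 1`, `A′` a smooth `W_n(k)`-algebra and `π : A′ → A` a
surjective ring homomorphism with kernel `pA′` (so `A = A′/pA′`); let `f : k → A` be the
structure map, characterized by `π ∘ algebraMap = f ∘ (coeff 0)`.  Then there is a (unique)
ring homomorphism `F̃ⁿ : W_n(A) → A′` with
`F̃ⁿ (x₁,…,x_n) = ∑_{i=0}^{n-1} pⁱ · (x̃_{i+1})^{p^{n-i}}` for arbitrary coefficient lifts
`x̃_j` along `π`; it is semilinear over the `n`-th iterate `Φⁿ` of the Witt vector Frobenius
of `W_n(k)`, injective, and its image is the kernel of the universal derivation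
`d : A′ → Ω¹_{A′/W_n(k)}`. -/
theorem tildeFn_exists (p : ℕ) [Fact p.Prime]
    (k : Type u) [Field k] [CharP k p] [PerfectRing k p]
    (n : ℕ) (hn : 0 < n)
    (A' : Type u) [CommRing A'] [Algebra (TruncatedWittVector p n k) A']
    [Algebra.FormallySmooth (TruncatedWittVector p n k) A']
    [Algebra.FinitePresentation (TruncatedWittVector p n k) A']
    (A : Type v) [CommRing A] (π : A' →+* A)
    (hπsurj : Function.Surjective π)
    (hπker : RingHom.ker π = Ideal.span {(p : A')})
    (f : k →+* A)
    (hf : ∀ c : TruncatedWittVector p n k,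
      π (algebraMap (TruncatedWittVector p n k) A' c) = f (c.coeff ⟨0, hn⟩)) :
    ∃ F : TruncatedWittVector p n A →+* A',
      -- (i) `F` is given on arbitrary coefficient lifts by the displayed formula
      (∀ (x : TruncatedWittVector p n A) (y : Fin n → A'),
          (∀ i, π (y i) = x.coeff i) →
          F x = ∑ i : Fin n, (p : A') ^ (i : ℕ) * y i ^ p ^ (n - (i : ℕ))) ∧
      -- uniqueness of such a map
      (∀ F' : TruncatedWittVector p n A →+* A',
          (∀ (x : TruncatedWittVector p n A) (y : Fin n → A'),
            (∀ i, π (y i) = x.coeff i) →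
            F' x = ∑ i : Fin n, (p : A') ^ (i : ℕ) * y i ^ p ^ (n - (i : ℕ))) →
          F' = F) ∧
      -- (ii) `Φⁿ`-semilinearity over `W_n(k)`
      (∀ (c : TruncatedWittVector p n k) (x : TruncatedWittVector p n A),
          F (twMap p n f c * x) =
            algebraMap (TruncatedWittVector p n k) A'
              (twMap p n (iterateFrobenius k p n) c) * F x) ∧
      -- (iii) injectivity
      Function.Injective F ∧
      -- (iv) the image equals the kernel of the universal derivation
      (∀ z : A', (∃ x, F x = z) ↔
        KaehlerDifferential.D (TruncatedWittVector p n k) A' z = 0) := by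
  have : Algebra.Smooth (TruncatedWittVector p n k) A' := { }
  have hp : p.Prime := Fact.out
  have hker : ∀ a, π a = 0 ↔ (p : A') ∣ a := fun a => by
    rw [← RingHom.mem_ker, hπker, Ideal.mem_span_singleton]
  have hpn : (p : A') ^ n = 0 := by
    have := congrArg (algebraMap (TruncatedWittVector p n k) A') (TF.W_pow_eq_zero (p := p) (k := k) n)
    simpa using this
  obtain ⟨hR, hL⟩ := TF.reduction (p := p) (TF.eps p k n hn) π hπsurj hker f
    (fun c => by rw [hf, TF.eps_apply])
  have hR' : ∀ (j : ℕ) (x : A), x ^ p ^ j = 0 → x = 0 := by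
    intro j
    induction j with
    | zero => intro x hx; simpa using hx
    | succ j ih =>
      intro x hx
      rw [pow_succ, pow_mul] at hx
      exact ih x (hR _ hx)
  have hTA : ∀ m < n, ∀ a : A', (p : A') ^ m * a = 0 → ∃ z, a = (p : A') * z := by
    intro m hm a ha
    obtain ⟨z, hz⟩ := TF.flat_tors (W := TruncatedWittVector p n k)
      (q := (p : TruncatedWittVector p n k) ^ m) (r := p) (fun a => TF.W_tors hm a) a
      (by rw [Algebra.smul_def, map_pow, map_natCast, ha])
    exact ⟨z, by rw [hz, Algebra.smul_def, map_natCast]⟩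
  have hflat : Module.Flat (TruncatedWittVector p n k) Ω[A'⁄TruncatedWittVector p n k] :=
    Module.Flat.trans (TruncatedWittVector p n k) A' _
  have hTO : ∀ m < n, ∀ a : Ω[A'⁄TruncatedWittVector p n k], (p : A') ^ m • a = 0 →
      ∃ z, a = (p : A') • z := by
    intro m hm a ha
    obtain ⟨z, hz⟩ := TF.flat_tors (W := TruncatedWittVector p n k)
      (q := (p : TruncatedWittVector p n k) ^ m) (r := p) (fun a => TF.W_tors hm a) a
      (by rw [← algebraMap_smul A', map_pow, map_natCast, ha])
    exact ⟨z, by rw [hz, ← algebraMap_smul A', map_natCast]⟩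
  obtain ⟨F, hF⟩ := TF.exists_F hpn π hπsurj (fun a => (hker a).1)
  choose σ hσ using hπsurj
  refine ⟨F, hF, ?_, ?_, ?_, ?_⟩
  · intro F' hF'
    ext x
    rw [hF x (fun i => σ (x.coeff i)) (fun i => hσ _),
      hF' x (fun i => σ (x.coeff i)) (fun i => hσ _)]
  · intro c x
    rw [map_mul]
    congr 1
    rw [hF _ (fun i => algebraMap _ A'
      (WittVector.truncate n (WittVector.teichmuller p (c.coeff i)))), ← TF.W_sum, map_sum]
    · simp only [map_mul, map_pow, map_natCast]
    · intro i
      rw [hf, WittVector.coeff_truncate, WittVector.teichmuller_coeff_zero, TF.twMap_coeff]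
  · rw [injective_iff_map_eq_zero]
    intro x hx
    have key : ∀ (i : ℕ) (hi : i < n), x.coeff ⟨i, hi⟩ = 0 := by
      intro i
      induction i using Nat.strong_induction_on with
      | _ i ih =>
      intro hi
      classical
      let y : Fin n → A' := fun j => if (j : ℕ) < i then 0 else σ (x.coeff j)
      have hy : ∀ j, π (y j) = x.coeff j := by
        intro j
        by_cases h : (j : ℕ) < i
        · simp only [y, h, if_true, map_zero]
          exact (ih j h j.2).symm
        · simp only [y, h, if_false, hσ]
      have h1 := hF x y hy
      rw [hx, ← Finset.add_sum_erase _ _ (Finset.mem_univ (⟨i, hi⟩ : Fin n))] at h1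
      have h2 : (p : A') ^ (i + 1) ∣ ∑ j ∈ Finset.univ.erase (⟨i, hi⟩ : Fin n),
          (p : A') ^ (j : ℕ) * y j ^ p ^ (n - (j : ℕ)) := by
        refine Finset.dvd_sum fun j hj => ?_
        by_cases h : (j : ℕ) < i
        · simp only [y, h, if_true]
          rw [zero_pow (pow_ne_zero _ hp.ne_zero), mul_zero]
          exact dvd_zero _
        · have hne : (j : ℕ) ≠ i := fun h' => (Finset.mem_erase.1 hj).1 (Fin.ext h')
          exact (pow_dvd_pow _ (by omega)).mul_right _
      obtain ⟨c, hc⟩ := h2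
      rw [hc] at h1
      obtain ⟨z, hz⟩ := hTA i hi (y ⟨i, hi⟩ ^ p ^ (n - i) + p * c) (by
        rw [mul_add, ← mul_assoc, ← pow_succ]
        exact h1.symm)
      refine hR' (n - i) _ ?_
      rw [← hy, ← map_pow, hker]
      exact ⟨z - c, by rw [mul_sub, ← hz]; ring⟩
    ext i
    rw [key i i.2]
    simp
  · intro z
    constructor
    · rintro ⟨x, rfl⟩
      rw [hF x (fun i => σ (x.coeff i)) (fun i => hσ _), map_sum]
      refine Finset.sum_eq_zero fun i _ => ?_
      rw [TF.D_term, show (i : ℕ) + (n - (i : ℕ)) = n by omega, hpn, zero_smul]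
    · intro hz
      obtain ⟨y, w, h⟩ := TF.descent hTO hL z n le_rfl ⟨0, by rw [hz, smul_zero]⟩
      refine ⟨TruncatedWittVector.mk p fun i => π (y i), ?_⟩
      rw [hF _ (fun i => y i) (fun i => by rw [TruncatedWittVector.coeff_mk]), h, hpn, zero_mul,
        add_zero, Finset.sum_range]
end

section
/- Let k be a finite field, d ≥ 1, G := GL_{d+1}(k), and Δ := {0, 1, …, d−1}. For 0 ≤ i ≤ d−1 let V_i ⊆ k^{d+1} be the span of the first i+1 standard basis vectors, and for a subset I ⊆ Δ let P_I ≤ G be the subgroup of all g ∈ G stabilizing V_i for every i ∈ Δ ∖ I (so P_I ⊆ P_J whenever I ⊆ J). For I ⊆ J, let q_{I,J}^* denote the injective pullback map from ℤ-valued functions on G⧸P_J to ℤ-valued functions on G⧸P_I along the natural projection G⧸P_I → G⧸P_J. Define the integral generalized Steinberg module v_{P_I}^G(ℤ) as the quotient of the ℤ-module of functions G⧸P_I → ℤ by the ℤ-submodule generated by the union over all J with I ⊊ J ⊆ Δ of the images of q_{I,J}^*. Then for every proper subset I ⊊ Δ, the ℤ-module v_{P_I}^G(ℤ) is finitely generated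 and free. -/
open Matrix

/-- `stdFlag k d i` is the subspace `V_i ⊆ k^{d+1}` spanned by the first `i+1` standard basis
vectors. -/
def stdFlag (k : Type*) [Field k] (d : ℕ) (i : ℕ) : Submodule k (Fin (d + 1) → k) :=
  Submodule.span k {v | ∃ j : Fin (d + 1), (j : ℕ) ≤ i ∧ v = Pi.single j 1}

/-- For a subset `I ⊆ Δ = {0,…,d-1}`, `parab k d I` is the (parabolic) subgroup of
`GL_{d+1}(k)` consisting of all `g` stabilizing `V_i` for every `i ∈ Δ ∖ I`. -/
def parab (k : Type*) [Field k] (d : ℕ) (I : Set (Fin d)) :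
    Subgroup (GL (Fin (d + 1)) k) where
  carrier := {g | ∀ i : Fin d, i ∉ I →
    (stdFlag k d i).map
      (Matrix.mulVecLin (g : Matrix (Fin (d + 1)) (Fin (d + 1)) k)) = stdFlag k d i}
  one_mem' := by
    intro i hi
    rw [Units.val_one, Matrix.mulVecLin_one, Submodule.map_id]
  mul_mem' := by
    intro a b ha hb i hi
    rw [Units.val_mul, Matrix.mulVecLin_mul, Submodule.map_comp, hb i hi, ha i hi]
  inv_mem' := by
    intro a ha i hi
    conv_lhs => rw [← ha i hi]
    rw [← Submodule.map_comp, ← Matrix.mulVecLin_mul, ← Units.val_mul, inv_mul_cancel,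
      Units.val_one, Matrix.mulVecLin_one, Submodule.map_id]

/-- The `ℤ`-module of `P`-invariant functions `G → ℤ`, i.e. of `ℤ`-valued functions on the
coset space `G⧸P`. -/
def invFuns {G : Type*} [Group G] (P : Subgroup G) : Submodule ℤ (G → ℤ) where
  carrier := {f | ∀ g : G, ∀ h ∈ P, f (g * h) = f g}
  add_mem' := by
    intro f₁ f₂ h₁ h₂ g h hh
    simp only [Pi.add_apply, h₁ g h hh, h₂ g h hh]
  zero_mem' := by intro g h hh; rfl
  smul_mem' := by
    intro c f hf g h hh
    simp only [Pi.smul_apply, hf g h hh]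

namespace SteinbergAux

/-- The initial segment `{0, …, i}` of `Fin (d+1)`. -/
def initSeg (d i : ℕ) : Finset (Fin (d + 1)) := Finset.univ.filter (fun j => (j : ℕ) ≤ i)

lemma mem_initSeg {d i : ℕ} {j : Fin (d + 1)} : j ∈ initSeg d i ↔ (j : ℕ) ≤ i := by
  simp [initSeg]

/-- If `c` increases along all steps in an interval, then it increases over the interval. -/
lemma lt_of_steps {d : ℕ} (S : Set (Fin d)) (c : Fin (d + 1) → ℤ)
    (hc : ∀ i ∈ S, c i.castSucc < c i.succ) (s t : ℕ) (hst : s < t) (ht : t < d + 1)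
    (hS : ∀ i : Fin d, s ≤ (i : ℕ) → (i : ℕ) < t → i ∈ S) :
    c ⟨s, by omega⟩ < c ⟨t, ht⟩ := by
  induction t with
  | zero => omega
  | succ t ih =>
    have h1 : c ⟨t, by omega⟩ < c ⟨t + 1, ht⟩ :=
      hc ⟨t, by omega⟩ (hS ⟨t, by omega⟩ (by simp; omega) (by simp))
    rcases Nat.lt_or_ge s t with h | h
    · exact (ih h (by omega) (fun i h2 h3 => hS i h2 (by omega))).trans h1
    · have : s = t := by omega
      subst this
      exact h1

/-- The combinatorial key lemma. -/
lemma sum_lt_of_ne {d : ℕ} (S : Set (Fin d)) (c : Fin (d + 1) → ℤ)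
    (hc : ∀ i ∈ S, c i.castSucc < c i.succ) (τ : Equiv.Perm (Fin (d + 1)))
    (hτ : ∀ i : Fin d, i ∉ S → (initSeg d i).map τ.toEmbedding = initSeg d i)
    (j : Fin d) (hj : j ∈ S) (hne : (initSeg d j).map τ.toEmbedding ≠ initSeg d j) :
    ∑ x ∈ initSeg d j, c x < ∑ x ∈ (initSeg d j).map τ.toEmbedding, c x := by
  set A := initSeg d j with hA
  set T := A.map τ.toEmbedding with hT
  have hcard : T.card = A.card := Finset.card_map _
  have key : ∀ s ∈ A \ T, ∀ t ∈ T \ A, c s < c t := by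
    intro s hs t ht
    rw [Finset.mem_sdiff] at hs ht
    obtain ⟨hsA, hsT⟩ := hs
    obtain ⟨htT, htA⟩ := ht
    rw [hA, mem_initSeg] at hsA htA
    have hsub : ∀ i i' : ℕ, i ≤ i' →
        (initSeg d i).map τ.toEmbedding ⊆ (initSeg d i').map τ.toEmbedding := by
      intro i i' h
      apply Finset.map_subset_map.2
      intro x hx
      rw [mem_initSeg] at hx ⊢
      omega
    refine lt_of_steps S c hc s t (by omega) t.2 ?_
    intro i hi1 hi2
    by_contra hi
    have hij : (i : ℕ) ≠ j := fun h => hi (by rwa [Fin.ext h])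
    rcases Nat.lt_or_gt_of_ne hij with h | h
    · apply hsT
      apply hsub i j h.le
      rw [hτ i hi, mem_initSeg]
      exact hi1
    · have := hsub j i h.le htT
      rw [hτ i hi, mem_initSeg] at this
      omega
  have hc1 : (A \ T).card = (T \ A).card := Finset.card_sdiff_comm hcard.symm
  have hne1 : (A \ T).Nonempty := by
    rw [Finset.nonempty_iff_ne_empty]
    intro h
    have : A ⊆ T := Finset.sdiff_eq_empty_iff_subset.1 h
    exact hne (Finset.eq_of_subset_of_card_le this hcard.le).symm
  have hne2 : (T \ A).Nonempty := by
    rw [← Finset.card_pos, ← hc1, Finset.card_pos]; exact hne1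
  have e1 := Finset.sum_inter_add_sum_sdiff A T c
  have e2 := Finset.sum_inter_add_sum_sdiff T A c
  rw [Finset.inter_comm] at e2
  obtain ⟨t0, ht0, hmin⟩ := Finset.exists_min_image (T \ A) c hne2
  have b1 : ∑ x ∈ A \ T, c x < (A \ T).card • c t0 := by
    rw [← Finset.sum_const]
    exact Finset.sum_lt_sum_of_nonempty hne1 (fun s hs => key s hs t0 ht0)
  have b2 : (T \ A).card • c t0 ≤ ∑ x ∈ T \ A, c x :=
    Finset.card_nsmul_le_sum _ _ _ hmin
  rw [hc1] at b1
  linarith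

lemma perm_eq_one {d : ℕ} (τ : Equiv.Perm (Fin (d + 1)))
    (h : ∀ i : Fin d, (initSeg d i).map τ.toEmbedding = initSeg d i) : τ = 1 := by
  have h' : ∀ i : ℕ, ∀ x : Fin (d + 1), (x : ℕ) ≤ i ↔ (τ x : ℕ) ≤ i := by
    intro i x
    by_cases hi : i < d
    · have := h ⟨i, hi⟩
      have h2 : τ x ∈ (initSeg d i).map τ.toEmbedding ↔ τ x ∈ initSeg d i := by
        rw [show (initSeg d i).map τ.toEmbedding = initSeg d i from this]
      rw [← mem_initSeg, ← mem_initSeg, ← h2]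
      simp
    · have := x.2
      have := (τ x).2
      omega
  ext x
  have h1 := (h' x x).1 le_rfl
  have h2 := (h' (τ x) x).2 le_rfl
  simp
  omega

variable {k : Type*} [Field k] {d : ℕ}

lemma mem_stdFlag {i : ℕ} {v : Fin (d + 1) → k} :
    v ∈ stdFlag k d i ↔ ∀ j : Fin (d + 1), i < (j : ℕ) → v j = 0 := by
  constructor
  · intro hv
    induction hv using Submodule.span_induction with
    | mem x hx =>
      obtain ⟨a, ha, rfl⟩ := hx
      intro j hj
      rw [Pi.single_apply, if_neg]
      rintro rfl
      omega
    | zero => intros; rfl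
    | add x y _ _ hx hy => intro j hj; simp [hx j hj, hy j hj]
    | smul a x _ hx => intro j hj; simp [hx j hj]
  · intro h
    rw [pi_eq_sum_univ' v]
    refine Submodule.sum_mem _ fun j _ => ?_
    by_cases hj : (j : ℕ) ≤ i
    · refine Submodule.smul_mem _ _ (Submodule.subset_span ⟨j, hj, ?_⟩)
      ext x
      simp [Pi.single_apply, eq_comm]
    · rw [h j (by omega), zero_smul]
      exact Submodule.zero_mem _

/-- Translate of the standard flag. -/
abbrev fl (g : GL (Fin (d + 1)) k) (i : ℕ) : Submodule k (Fin (d + 1) → k) :=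
  (stdFlag k d i).map (Matrix.mulVecLin (g : Matrix (Fin (d + 1)) (Fin (d + 1)) k))

lemma inj_mulVec (g : GL (Fin (d + 1)) k) :
    Function.Injective (Matrix.mulVecLin (g : Matrix (Fin (d + 1)) (Fin (d + 1)) k)) := by
  intro v w h
  have := congrArg (fun x => (g⁻¹).val *ᵥ x) h
  simpa [Matrix.mulVec_mulVec, ← Units.val_mul] using this

lemma fl_mul (g h : GL (Fin (d + 1)) k) (i : ℕ) :
    fl (g * h) i = (fl h i).map (Matrix.mulVecLin (g : Matrix (Fin (d + 1)) (Fin (d + 1)) k)) := by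
  rw [fl, Units.val_mul, Matrix.mulVecLin_mul, Submodule.map_comp]

lemma fl_eq_of_le {g h : GL (Fin (d + 1)) k} {i : ℕ} (hle : fl g i ≤ fl h i) :
    fl g i = fl h i := by
  apply Submodule.eq_of_le_of_finrank_le hle
  rw [← (Submodule.equivMapOfInjective _ (inj_mulVec g) (stdFlag k d i)).finrank_eq,
    ← (Submodule.equivMapOfInjective _ (inj_mulVec h) (stdFlag k d i)).finrank_eq]

lemma fl_one (i : ℕ) : fl (1 : GL (Fin (d + 1)) k) i = stdFlag k d i := by
  rw [fl, Units.val_one, Matrix.mulVecLin_one, Submodule.map_id]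

lemma mem_parab_iff {I : Set (Fin d)} {g : GL (Fin (d + 1)) k} :
    g ∈ parab k d I ↔ ∀ i : Fin d, i ∉ I → fl g i = stdFlag k d i := Iff.rfl

lemma mem_parab_of {I : Set (Fin d)} {g : GL (Fin (d + 1)) k}
    (h : ∀ i : Fin d, i ∉ I → ∀ v ∈ stdFlag k d i,
      (g : Matrix (Fin (d + 1)) (Fin (d + 1)) k) *ᵥ v ∈ stdFlag k d i) : g ∈ parab k d I := by
  rw [mem_parab_iff]
  intro i hi
  rw [← fl_one]
  apply fl_eq_of_le
  rw [fl_one]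
  rintro _ ⟨v, hv, rfl⟩
  exact h i hi v hv

lemma parab_mono {I J : Set (Fin d)} (h : I ⊆ J) : parab k d I ≤ parab k d J :=
  fun _ hg i hi => hg i (fun h' => hi (h h'))

lemma fl_mul_parab {I : Set (Fin d)} (g : GL (Fin (d + 1)) k) {p : GL (Fin (d + 1)) k}
    (hp : p ∈ parab k d I) {i : Fin d} (hi : i ∉ I) : fl (g * p) i = fl g i := by
  rw [fl_mul, mem_parab_iff.1 hp i hi]

lemma inv_mul_mem_parab_iff {I : Set (Fin d)} {g h : GL (Fin (d + 1)) k} :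
    g⁻¹ * h ∈ parab k d I ↔ ∀ i : Fin d, i ∉ I → fl h i = fl g i := by
  constructor
  · intro H i hi
    rw [← fl_mul_parab g H hi, mul_inv_cancel_left]
  · intro H
    rw [mem_parab_iff]
    intro i hi
    rw [fl_mul, H i hi, ← fl_mul, inv_mul_cancel, fl_one]

/-- `a` is the largest index of a nonzero coordinate of `v`. -/
def IsLow (v : Fin (d + 1) → k) (a : Fin (d + 1)) : Prop := v a ≠ 0 ∧ ∀ b, a < b → v b = 0

lemma exists_isLow {v : Fin (d + 1) → k} (hv : v ≠ 0) : ∃ a, IsLow v a := by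
  classical
  obtain ⟨x, hx⟩ := Function.ne_iff.1 hv
  obtain ⟨a, ha, hmax⟩ := Finset.exists_max_image (Finset.univ.filter (fun a => v a ≠ 0)) id
    ⟨x, by simpa using hx⟩
  refine ⟨a, by simpa using ha, fun b hb => ?_⟩
  by_contra h
  exact absurd (hmax b (by simpa using h)) (not_le.2 hb)

lemma IsLow.unique {v : Fin (d + 1) → k} {a b : Fin (d + 1)} (ha : IsLow v a) (hb : IsLow v b) :
    a = b := by
  rcases lt_trichotomy a b with h | h | h
  · exact absurd (ha.2 b h) hb.1
  · exact h
  · exact absurd (hb.2 a h) ha.1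

/-- Upper triangular with nonzero diagonal. -/
def UT (u : GL (Fin (d + 1)) k) : Prop :=
  (∀ i j : Fin (d + 1), j < i → u.val i j = 0) ∧ ∀ i, u.val i i ≠ 0

lemma UT.isLow {u : GL (Fin (d + 1)) k} (hu : UT u) {v : Fin (d + 1) → k} {a : Fin (d + 1)}
    (h : IsLow v a) : IsLow (u.val *ᵥ v) a := by
  constructor
  · have : (u.val *ᵥ v) a = u.val a a * v a := by
      rw [Matrix.mulVec, dotProduct]
      apply Finset.sum_eq_single a
      · intro b _ hb
        rcases lt_or_gt_of_ne hb with h' | h'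
        · rw [hu.1 a b h', zero_mul]
        · rw [h.2 b h', mul_zero]
      · simp
    rw [this]
    exact mul_ne_zero (hu.2 a) h.1
  · intro b hb
    rw [Matrix.mulVec, dotProduct]
    apply Finset.sum_eq_zero
    intro c _
    rcases lt_or_ge a c with h' | h'
    · rw [h.2 c h', mul_zero]
    · rw [hu.1 b c (lt_of_le_of_lt h' hb), zero_mul]

open Classical in
/-- The set of pivots of a subspace. -/
noncomputable def pos (V : Submodule k (Fin (d + 1) → k)) : Finset (Fin (d + 1)) :=
  Finset.univ.filter (fun a => ∃ v ∈ V, IsLow v a)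

lemma mem_pos {V : Submodule k (Fin (d + 1) → k)} {a : Fin (d + 1)} :
    a ∈ pos V ↔ ∃ v ∈ V, IsLow v a := by
  classical
  simp [pos]

lemma pos_map {u : GL (Fin (d + 1)) k} (hu : UT u) (V : Submodule k (Fin (d + 1) → k)) :
    pos (V.map (Matrix.mulVecLin u.val)) = pos V := by
  ext a
  rw [mem_pos, mem_pos]
  constructor
  · rintro ⟨_, ⟨v, hv, rfl⟩, ha⟩
    refine ⟨v, hv, ?_⟩
    have hv0 : v ≠ 0 := by
      rintro rfl
      simp [IsLow] at ha
    obtain ⟨b, hb⟩ := exists_isLow hv0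
    rwa [ha.unique (hu.isLow hb)]
  · rintro ⟨v, hv, ha⟩
    exact ⟨_, ⟨v, hv, rfl⟩, hu.isLow ha⟩

/-- The permutation matrix sending `e_j` to `e_{w j}`. -/
def pm (k : Type*) [Field k] (w : Equiv.Perm (Fin (d + 1))) :
    Matrix (Fin (d + 1)) (Fin (d + 1)) k :=
  fun i j => if i = w j then 1 else 0

lemma pm_mulVec (w : Equiv.Perm (Fin (d + 1))) (v : Fin (d + 1) → k) (i : Fin (d + 1)) :
    (pm k w *ᵥ v) i = v (w⁻¹ i) := by
  rw [Matrix.mulVec, dotProduct, Finset.sum_eq_single (w⁻¹ i)]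
  · simp [pm]
  · intro b _ hb
    have : i ≠ w b := by
      rintro rfl
      simp at hb
    simp [pm, this]
  · simp

lemma pm_mul (a b : Equiv.Perm (Fin (d + 1))) : pm k (a * b) = pm k a * pm k b := by
  apply Matrix.mulVec_injective
  ext v i
  rw [← Matrix.mulVec_mulVec, pm_mulVec, pm_mulVec, pm_mulVec]
  simp

lemma pm_one : pm k (1 : Equiv.Perm (Fin (d + 1))) = 1 := by
  apply Matrix.mulVec_injective
  ext v i
  rw [pm_mulVec]
  simp

/-- Permutation matrices in `GL`. -/
def pg (k : Type*) [Field k] (w : Equiv.Perm (Fin (d + 1))) : GL (Fin (d + 1)) k where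
  val := pm k w
  inv := pm k w⁻¹
  val_inv := by rw [← pm_mul, mul_inv_cancel, pm_one]
  inv_val := by rw [← pm_mul, inv_mul_cancel, pm_one]

lemma pg_mul (a b : Equiv.Perm (Fin (d + 1))) : pg k (a * b) = pg k a * pg k b :=
  Units.ext (pm_mul a b)

lemma pg_one : pg k (1 : Equiv.Perm (Fin (d + 1))) = 1 := Units.ext pm_one

lemma mem_fl_pg {w : Equiv.Perm (Fin (d + 1))} {i : ℕ} {v : Fin (d + 1) → k} :
    v ∈ fl (pg k w) i ↔ ∀ t : Fin (d + 1), i < (t : ℕ) → v (w t) = 0 := by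
  constructor
  · rintro ⟨x, hx, rfl⟩ t ht
    have := mem_stdFlag.1 hx t ht
    simp only [Matrix.mulVecLin_apply, pg, pm_mulVec]
    simpa using this
  · intro h
    refine ⟨fun t => v (w t), mem_stdFlag.2 h, ?_⟩
    ext t
    simp only [Matrix.mulVecLin_apply, pg, pm_mulVec]
    simp

lemma pos_fl_pg (w : Equiv.Perm (Fin (d + 1))) (i : ℕ) :
    pos (fl (pg k w) i) = (initSeg d i).map w.toEmbedding := by
  ext a
  rw [mem_pos, Finset.mem_map_equiv, mem_initSeg]
  constructor
  · rintro ⟨v, hv, ha⟩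
    by_contra h
    apply ha.1
    have := mem_fl_pg.1 hv (w.symm a) (by omega)
    simpa using this
  · intro h
    refine ⟨Pi.single a 1, mem_fl_pg.2 ?_, by simp, ?_⟩
    · intro t ht
      rw [Pi.single_apply, if_neg]
      rintro rfl
      simp at h
      omega
    · intro b hb
      rw [Pi.single_apply, if_neg hb.ne']

/-- A Bruhat factorisation of `g` modulo `P_I`. -/
def Fac (I : Set (Fin d)) (g u : GL (Fin (d + 1)) k) (w : Equiv.Perm (Fin (d + 1))) : Prop :=
  UT u ∧ (u * pg k w)⁻¹ * g ∈ parab k d I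

lemma Fac.fl {I : Set (Fin d)} {g u : GL (Fin (d + 1)) k} {w : Equiv.Perm (Fin (d + 1))}
    (h : Fac I g u w) {i : Fin d} (hi : i ∉ I) : fl g i = fl (u * pg k w) i :=
  inv_mul_mem_parab_iff.1 h.2 i hi

lemma Fac.pos {I : Set (Fin d)} {g u : GL (Fin (d + 1)) k} {w : Equiv.Perm (Fin (d + 1))}
    (h : Fac I g u w) {i : Fin d} (hi : i ∉ I) :
    pos (SteinbergAux.fl g i) = (initSeg d i).map w.toEmbedding := by
  rw [h.fl hi, fl_mul, pos_map h.1, pos_fl_pg]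

/-- Elementary transvection in `GL`. -/
noncomputable def tv (i j : Fin (d + 1)) (hij : i ≠ j) (c : k) : GL (Fin (d + 1)) k :=
  Matrix.GeneralLinearGroup.mkOfDetNeZero (Matrix.transvection i j c)
    (by rw [Matrix.det_transvection_of_ne i j hij]; exact one_ne_zero)

lemma tv_mulVec (i j : Fin (d + 1)) (hij : i ≠ j) (c : k) (v : Fin (d + 1) → k) :
    (tv i j hij c).val *ᵥ v = v + (c * v j) • Pi.single i 1 := by
  have : (tv i j hij c).val = Matrix.transvection i j c := rfl
  rw [this, Matrix.transvection, Matrix.add_mulVec, Matrix.one_mulVec, Matrix.single_mulVec]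
  congr 1
  ext x
  simp [Function.update_apply, Pi.single_apply]

lemma tv_mem (i j : Fin (d + 1)) (hij : i < j) (c : k) : tv i j hij.ne c ∈ parab k d ∅ := by
  apply mem_parab_of
  intro m _ v hv
  rw [tv_mulVec]
  refine Submodule.add_mem _ hv ?_
  by_cases hm : (m : ℕ) < j
  · rw [mem_stdFlag.1 hv j hm]
    simp
  · refine Submodule.smul_mem _ _ (Submodule.subset_span ⟨i, ?_, rfl⟩)
    have : (i : ℕ) < j := hij
    omega

/-- Bruhat decomposition. -/
lemma exists_fac (g : GL (Fin (d + 1)) k) : ∃ u w, Fac (∅ : Set (Fin d)) g u w := by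
  classical
  let Q : ℕ → Prop := fun N => ∃ b ∈ parab k d ∅, ∃ σ : Fin (d + 1) → Fin (d + 1),
    (∀ j, IsLow ((g * b).val *ᵥ Pi.single j 1) (σ j)) ∧ ∑ j, (σ j : ℕ) = N
  have hcol : ∀ (h : GL (Fin (d + 1)) k) (v : Fin (d + 1) → k), v ≠ 0 → h.val *ᵥ v ≠ 0 := by
    intro h v hv h0
    apply hv
    apply inj_mulVec h
    simpa using h0
  have hs : ∀ j : Fin (d + 1), (Pi.single j 1 : Fin (d + 1) → k) ≠ 0 := by
    intro j
    simp
  have hQ : ∃ N, Q N := by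
    choose σ hσ using fun j => exists_isLow (hcol g _ (hs j))
    exact ⟨_, 1, Subgroup.one_mem _, σ, by simpa using hσ, rfl⟩
  obtain ⟨b, hb, σ, hσ, hN⟩ := Nat.find_spec hQ
  have hinj' : ∀ i j, i < j → σ i ≠ σ j := by
    intro i j hij heq
    set h := g * b with hh
    set x := h.val *ᵥ Pi.single i 1 with hx
    set y := h.val *ᵥ Pi.single j 1 with hy
    have hxl : IsLow x (σ j) := heq ▸ hσ i
    have hyl : IsLow y (σ j) := hσ j
    set c : k := - (y (σ j) / x (σ j)) with hc
    have hT : ∀ t, (h * tv i j hij.ne c).val *ᵥ Pi.single t 1 =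
        if t = j then y + c • x else h.val *ᵥ Pi.single t 1 := by
      intro t
      rw [Units.val_mul, ← Matrix.mulVec_mulVec, tv_mulVec, Matrix.mulVec_add, Matrix.mulVec_smul]
      by_cases ht : t = j
      · subst ht
        simp [hx, hy]
      · simp [ht, Ne.symm ht]
    have hne : y + c • x ≠ 0 := by
      have := hcol (h * tv i j hij.ne c) _ (hs j)
      rwa [hT, if_pos rfl] at this
    obtain ⟨a', ha'⟩ := exists_isLow hne
    have hlt : a' < σ j := by
      by_contra hge
      apply ha'.1
      rcases eq_or_lt_of_le (not_lt.1 hge) with h1 | h1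
      · rw [← h1]
        have := hxl.1
        simp only [Pi.add_apply, Pi.smul_apply, smul_eq_mul, hc]
        field_simp
        ring
      · simp [hxl.2 a' h1, hyl.2 a' h1]
    refine Nat.find_min hQ (m := ∑ t, (Function.update σ j a' t : ℕ)) ?_
      ⟨b * tv i j hij.ne c, Subgroup.mul_mem _ hb (tv_mem i j hij c), Function.update σ j a', ?_,
        rfl⟩
    · rw [← hN]
      apply Finset.sum_lt_sum
      · intro t _
        by_cases ht : t = j
        · subst ht
          simpa using hlt.le
        · simp [ht]
      · exact ⟨j, Finset.mem_univ _, by simpa using hlt⟩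
    · intro t
      rw [← mul_assoc, ← hh, hT]
      by_cases ht : t = j
      · subst ht
        simpa using ha'
      · simpa [ht] using hσ t
  have hinj : Function.Injective σ := by
    intro i j h
    rcases lt_trichotomy i j with h' | h' | h'
    · exact absurd h (hinj' i j h')
    · exact h'
    · exact absurd h.symm (hinj' j i h')
  let w : Equiv.Perm (Fin (d + 1)) := Equiv.ofBijective σ (Finite.injective_iff_bijective.1 hinj)
  have hu : ∀ i j, (g * b * (pg k w)⁻¹).val i (w j) = ((g * b).val *ᵥ Pi.single j 1) i := by
    intro i j
    have : (g * b).val = (g * b * (pg k w)⁻¹).val * pm k w := by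
      change _ = (g * b * (pg k w)⁻¹).val * (pg k w).val
      rw [← Units.val_mul, inv_mul_cancel_right]
    conv_rhs => rw [this, ← Matrix.mulVec_mulVec]
    have h2 : pm k w *ᵥ Pi.single j 1 = Pi.single (w j) 1 := by
      ext t
      rw [pm_mulVec]
      simp only [Pi.single_apply, Equiv.Perm.inv_eq_iff_eq]
    rw [h2, Matrix.mulVec_single_one]
    rfl
  refine ⟨g * b * (pg k w)⁻¹, w, ⟨?_, ?_⟩, ?_⟩
  · intro i j hij
    obtain ⟨t, rfl⟩ := w.surjective j
    rw [hu]
    exact (hσ t).2 i hij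
  · intro i
    obtain ⟨t, rfl⟩ := w.surjective i
    rw [hu]
    exact (hσ t).1
  · rw [inv_mul_cancel_right, _root_.mul_inv_rev, inv_mul_cancel_right]
    exact Subgroup.inv_mem _ hb

lemma swap_initSeg {i j : Fin d} (hij : i ≠ j) (x : Fin (d + 1)) :
    (Equiv.swap j.castSucc j.succ x : ℕ) ≤ i ↔ (x : ℕ) ≤ i := by
  have h1 : (i : ℕ) ≠ j := fun h => hij (Fin.ext h)
  rw [Equiv.swap_apply_def]
  split_ifs with h2 h3
  · subst h2; simp; omega
  · subst h3; simp; omega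
  · rfl

lemma swap_mem {J : Set (Fin d)} {j : Fin d} (hj : j ∈ J) :
    pg k (Equiv.swap j.castSucc j.succ) ∈ parab k d J := by
  apply mem_parab_of
  intro i hi v hv
  rw [mem_stdFlag] at hv ⊢
  intro x hx
  have hij : i ≠ j := by rintro rfl; exact hi hj
  change (pm k _ *ᵥ v) x = 0
  rw [pm_mulVec, Equiv.swap_inv]
  apply hv
  have := swap_initSeg hij x
  omega

/-- Bruhat decomposition modulo `P_I`, with minimal representatives. -/
lemma exists_fac_sorted (I : Set (Fin d)) (g : GL (Fin (d + 1)) k) :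
    ∃ u w, Fac I g u w ∧ ∀ i ∈ I, w i.castSucc < w i.succ := by
  classical
  obtain ⟨u0, w0, h0⟩ := exists_fac g
  obtain ⟨w, hw, hmax⟩ := Finset.exists_max_image
    (Finset.univ.filter (fun w => ∃ u, Fac I g u w))
    (fun w => ∑ x : Fin (d + 1), (x : ℤ) * (w x : ℤ))
    ⟨w0, by simpa using ⟨u0, h0.1, parab_mono (Set.empty_subset _) h0.2⟩⟩
  obtain ⟨u, hu⟩ : ∃ u, Fac I g u w := by simpa using hw
  refine ⟨u, w, hu, fun i hi => ?_⟩
  by_contra hlt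
  have hne : w i.castSucc ≠ w i.succ := fun h => by
    have := congrArg Fin.val (w.injective h)
    simp at this
  have hgt : w i.succ < w i.castSucc := lt_of_le_of_ne (not_lt.1 hlt) hne.symm
  set s := Equiv.swap i.castSucc i.succ with hs
  have hfac : Fac I g u (w * s) := by
    refine ⟨hu.1, ?_⟩
    rw [pg_mul, ← mul_assoc, _root_.mul_inv_rev, mul_assoc]
    exact Subgroup.mul_mem _ (Subgroup.inv_mem _ (swap_mem hi)) hu.2
  have hle := hmax (w * s) (by simpa using ⟨u, hfac⟩)
  have e1 : ∑ x : Fin (d + 1), (x : ℤ) * ((w * s) x : ℤ) =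
      ∑ x : Fin (d + 1), ((s x : Fin (d + 1)) : ℤ) * (w x : ℤ) := by
    rw [← Equiv.sum_comp s]
    simp [hs]
  have e2 : ∀ x : Fin (d + 1), ((s x : Fin (d + 1)) : ℤ) * (w x : ℤ) = (x : ℤ) * (w x : ℤ) +
      ((if x = i.castSucc then (w x : ℤ) else 0) - (if x = i.succ then (w x : ℤ) else 0)) := by
    intro x
    have hcs : i.succ ≠ i.castSucc := fun h => by
      have := congrArg Fin.val h
      simp at this
    rw [hs, Equiv.swap_apply_def]
    by_cases h1 : x = i.castSucc
    · subst h1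
      simp [hcs.symm]
      ring
    · by_cases h2 : x = i.succ
      · subst h2
        simp [hcs]
        ring
      · simp [h1, h2]
  simp only [e1] at hle
  simp only [e2, Finset.sum_add_distrib, Finset.sum_sub_distrib, Finset.sum_ite_eq',
    Finset.mem_univ, if_true] at hle
  have : (w i.succ : ℕ) < w i.castSucc := hgt
  omega

open Classical in
/-- The potential function. -/
noncomputable def ell (I : Set (Fin d)) (g : GL (Fin (d + 1)) k) : ℤ :=
  ∑ i ∈ Finset.univ.filter (fun i : Fin d => i ∉ I), ∑ a ∈ pos (fl g i), (a : ℤ)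

lemma ell_le (I : Set (Fin d)) (g : GL (Fin (d + 1)) k) : ell I g ≤ d * ((d + 1) * d) := by
  classical
  have h1 : ∀ i : Fin d, ∑ a ∈ pos (fl g i), (a : ℤ) ≤ (d + 1) * d := by
    intro i
    calc ∑ a ∈ pos (fl g i), (a : ℤ) ≤ (pos (fl g i)).card • (d : ℤ) :=
          Finset.sum_le_card_nsmul _ _ _ (fun a _ => by have := a.2; omega)
      _ ≤ (d + 1) * d := by
          rw [nsmul_eq_mul]
          apply mul_le_mul_of_nonneg_right _ (by positivity)
          have := Finset.card_le_univ (pos (fl g i))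
          rw [Fintype.card_fin] at this
          exact_mod_cast this
  rw [ell]
  calc _ ≤ (Finset.univ.filter (fun i : Fin d => i ∉ I)).card • ((d + 1) * d : ℤ) :=
        Finset.sum_le_card_nsmul _ _ _ (fun i _ => h1 i)
    _ ≤ _ := by
        rw [nsmul_eq_mul]
        apply mul_le_mul_of_nonneg_right _ (by positivity)
        have := Finset.card_le_univ (Finset.univ.filter (fun i : Fin d => i ∉ I))
        rw [Fintype.card_fin] at this
        exact_mod_cast this

lemma ell_nonneg (I : Set (Fin d)) (g : GL (Fin (d + 1)) k) : 0 ≤ ell I g :=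
  Finset.sum_nonneg fun _ _ => Finset.sum_nonneg fun _ _ => by positivity

lemma ell_mul (I : Set (Fin d)) (g p : GL (Fin (d + 1)) k) (hp : p ∈ parab k d I) :
    ell I (g * p) = ell I g := by
  classical
  rw [ell, ell]
  apply Finset.sum_congr rfl
  intro i hi
  rw [fl_mul_parab g hp (by simpa using hi)]

lemma initSeg_perm_eq {w w' : Equiv.Perm (Fin (d + 1))} {i : ℕ}
    (h : (initSeg d i).map w'.toEmbedding = (initSeg d i).map w.toEmbedding) :
    (initSeg d i).map (w⁻¹ * w').toEmbedding = initSeg d i := by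
  have := congrArg (Finset.map (w⁻¹).toEmbedding) h
  rw [Finset.map_map, Finset.map_map] at this
  have e1 : w'.toEmbedding.trans (w⁻¹).toEmbedding = (w⁻¹ * w').toEmbedding := rfl
  have e2 : w.toEmbedding.trans (w⁻¹).toEmbedding = Function.Embedding.refl _ := by
    ext x
    simp
  rwa [e1, e2, Finset.map_refl] at this

lemma fl_eq_of_pos {I : Set (Fin d)} {j : Fin d} (hj : j ∉ I)
    {g h u : GL (Fin (d + 1)) k} {w : Equiv.Perm (Fin (d + 1))} (hg : Fac I g u w)
    (hw : ∀ i ∈ insert j I, w i.castSucc < w i.succ)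
    (hgh : ∀ i : Fin d, i ∉ insert j I → fl h i = fl g i)
    (hpos : pos (fl h j) = (initSeg d j).map w.toEmbedding) : fl h j = fl g j := by
  set h' := u⁻¹ * h with hh'
  have hI : ∀ i : Fin d, i ∉ insert j I → i ∉ I := fun i hi hi' => hi (Set.mem_insert_of_mem _ hi')
  have H : ∀ i : Fin d, i ∉ insert j I → fl h' i = fl (pg k w) i := by
    intro i hi
    rw [hh', fl_mul, hgh i hi, hg.fl (hI i hi), ← fl_mul, inv_mul_cancel_left]
  have hpos' : pos (fl h' j) = (initSeg d j).map w.toEmbedding := by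
    rw [← hpos, ← pos_map hg.1, ← fl_mul, hh', mul_inv_cancel_left]
  have hmono : ∀ (x : GL (Fin (d + 1)) k) {i i' : ℕ}, i ≤ i' → fl x i ≤ fl x i' := by
    intro x i i' hii
    apply Submodule.map_mono
    intro v hv
    rw [mem_stdFlag] at hv ⊢
    exact fun t ht => hv t (by omega)
  have hwlt : ∀ s t : Fin (d + 1), s < t →
      (∀ i : Fin d, (s : ℕ) ≤ i → (i : ℕ) < t → i ∈ insert j I) → w s < w t := by
    intro s t hst hall
    have := lt_of_steps (insert j I) (fun x => ((w x : ℕ) : ℤ))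
      (fun i hi => by have : (w i.castSucc : ℕ) < w i.succ := hw i hi
                      exact_mod_cast this) s t hst t.2 hall
    have h2 : ((w s : ℕ) : ℤ) < (w t : ℕ) := this
    exact_mod_cast h2
  have key : ∀ n : ℕ, ∀ v ∈ fl h' j, (∀ b : Fin (d + 1), n ≤ (b : ℕ) → v b = 0) →
      v ∈ fl (pg k w) j := by
    intro n
    induction n with
    | zero =>
      intro v _ hv
      have : v = 0 := by ext b; exact hv b (Nat.zero_le _)
      rw [this]
      exact Submodule.zero_mem _
    | succ n ih =>
      intro v hv hvn
      by_cases hall : ∀ b : Fin (d + 1), n ≤ (b : ℕ) → v b = 0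
      · exact ih v hv hall
      push Not at hall
      obtain ⟨a, han, hav⟩ := hall
      have hna : (a : ℕ) = n := by
        by_contra hne
        exact hav (hvn a (by omega))
      have hlow : IsLow v a := ⟨hav, fun b hb => hvn b (by
        have : (a : ℕ) < b := hb
        omega)⟩
      have ha : a ∈ pos (fl h' j) := mem_pos.2 ⟨v, hv, hlow⟩
      rw [hpos', Finset.mem_map_equiv, mem_initSeg] at ha
      set s := w.symm a with hs
      have hws : w s = a := by simp [hs]
      by_cases hex : ∃ i : Fin d, i ∉ insert j I ∧ (s : ℕ) ≤ i ∧ i < j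
      · obtain ⟨i, hi, hsi, hij⟩ := hex
        have hij' : (i : ℕ) < j := hij
        have hei : (Pi.single a 1 : Fin (d + 1) → k) ∈ fl (pg k w) i := by
          rw [mem_fl_pg]
          intro t ht
          rw [Pi.single_apply, if_neg]
          intro h
          rw [← hws] at h
          have := w.injective h
          subst this
          omega
        have he1 := hmono _ hij'.le hei
        have he2 : (Pi.single a 1 : Fin (d + 1) → k) ∈ fl h' j :=
          hmono _ hij'.le (by rw [H i hi]; exact hei)
        have hr := ih (v - v a • Pi.single a 1)
          (Submodule.sub_mem _ hv (Submodule.smul_mem _ _ he2)) (by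
            intro b hb
            by_cases hba : b = a
            · subst hba; simp
            · have : v b = 0 := hvn b (by
                have : (b : ℕ) ≠ a := fun h => hba (Fin.ext h)
                omega)
              simp [this, hba])
        have := Submodule.add_mem _ hr (Submodule.smul_mem _ (v a) he1)
        simpa using this
      · push Not at hex
        rw [mem_fl_pg]
        intro t ht
        by_contra hvt
        have hle : w t ≤ w s := by
          rw [hws]
          by_contra hlt
          exact hvt (hlow.2 _ (not_le.1 hlt))
        have hst : s < t := by
          have : (s : ℕ) < t := by omega
          exact this
        apply absurd (hwlt s t hst ?_) (not_lt.2 hle)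
        intro i hi1 hi2
        by_contra hi
        have hji := hex i hi hi1
        have hji' : (j : ℕ) ≤ i := hji
        have hvi : v ∈ fl (pg k w) i := by
          rw [← H i hi]
          exact hmono _ hji' hv
        exact hvt (mem_fl_pg.1 hvi t hi2)
  have hle : fl h' j ≤ fl (pg k w) j := fun v hv =>
    key (d + 1) v hv (fun b hb => absurd b.2 (by omega))
  have heq := fl_eq_of_le hle
  have e1 : fl h j = (fl h' j).map (Matrix.mulVecLin u.val) := by
    rw [← fl_mul, hh', mul_inv_cancel_left]
  rw [e1, heq, hg.fl hj, fl_mul]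

lemma ell_lt {I : Set (Fin d)} {j : Fin d} (hj : j ∉ I)
    {g h u : GL (Fin (d + 1)) k} {w : Equiv.Perm (Fin (d + 1))} (hg : Fac I g u w)
    (hw : ∀ i ∈ insert j I, w i.castSucc < w i.succ)
    (hJ : g⁻¹ * h ∈ parab k d (insert j I)) (hI : g⁻¹ * h ∉ parab k d I) :
    ell I g < ell I h := by
  classical
  rw [inv_mul_mem_parab_iff] at hJ hI
  obtain ⟨u', w', h0⟩ := exists_fac h
  have h0' : Fac I h u' w' := ⟨h0.1, parab_mono (Set.empty_subset _) h0.2⟩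
  have hsub : ∀ i : Fin d, i ∉ insert j I → i ∉ I :=
    fun i hi hi' => hi (Set.mem_insert_of_mem _ hi')
  have hnej : fl h j ≠ fl g j := by
    intro heq
    apply hI
    intro i hi
    by_cases hij : i = j
    · rw [hij]; exact heq
    · exact hJ i (by simp [hij, hi])
  have hne : (initSeg d j).map (w⁻¹ * w').toEmbedding ≠ initSeg d j := by
    intro heq
    apply hnej
    apply fl_eq_of_pos hj hg hw hJ
    rw [h0'.pos hj]
    have := congrArg (Finset.map w.toEmbedding) heq
    rw [Finset.map_map] at this
    rw [← this]
    congr 1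
    ext x
    simp
  have hL := sum_lt_of_ne (insert j I) (fun x => ((w x : ℕ) : ℤ))
    (fun i hi => by have : (w i.castSucc : ℕ) < w i.succ := hw i hi
                    exact_mod_cast this) (w⁻¹ * w')
    (fun i hi => initSeg_perm_eq (by
      rw [← h0'.pos (hsub i hi), ← hg.pos (hsub i hi), hJ i hi])) j (Set.mem_insert _ _) hne
  rw [Finset.sum_map] at hL
  rw [ell, ell]
  apply Finset.sum_lt_sum
  · intro i hi
    by_cases hij : i = j
    · subst hij
      rw [hg.pos hj, h0'.pos hj, Finset.sum_map, Finset.sum_map]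
      simpa using hL.le
    · rw [hJ i (by simpa [hij] using hi)]
  · refine ⟨j, by simpa using hj, ?_⟩
    rw [hg.pos hj, h0'.pos hj, Finset.sum_map, Finset.sum_map]
    simpa using hL

lemma ell_gt {I : Set (Fin d)} {g u : GL (Fin (d + 1)) k} {w τ : Equiv.Perm (Fin (d + 1))}
    (hg : Fac I g u w) (hw : ∀ i, i ∉ I → w i.succ < w i.castSucc)
    (hτ : ∀ i : Fin d, i ∈ I → (initSeg d i).map τ.toEmbedding = initSeg d i) (hτ1 : τ ≠ 1) :
    ell I (u * pg k (w * τ)) < ell I g := by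
  classical
  have h' : Fac I (u * pg k (w * τ)) u (w * τ) :=
    ⟨hg.1, by rw [inv_mul_cancel]; exact Subgroup.one_mem _⟩
  have hL : ∀ j : Fin d, j ∉ I → (initSeg d j).map τ.toEmbedding ≠ initSeg d j →
      ∑ a ∈ pos (fl (u * pg k (w * τ)) j), (a : ℤ) < ∑ a ∈ pos (fl g j), (a : ℤ) := by
    intro j hj hne
    have := sum_lt_of_ne Iᶜ (fun x => - ((w x : ℕ) : ℤ))
      (fun i hi => by have : (w i.succ : ℕ) < w i.castSucc := hw i hi
                      simpa using this) τ
      (fun i hi => hτ i (by simpa using hi)) j hj hne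
    rw [hg.pos hj, h'.pos hj, Finset.sum_map, Finset.sum_map]
    rw [Finset.sum_map, Finset.sum_neg_distrib, Finset.sum_neg_distrib] at this
    simpa using this
  have hex : ∃ j : Fin d, (initSeg d j).map τ.toEmbedding ≠ initSeg d j := by
    by_contra hall
    push Not at hall
    exact hτ1 (perm_eq_one τ hall)
  obtain ⟨j, hj⟩ := hex
  have hjI : j ∉ I := fun h => hj (hτ j h)
  rw [ell, ell]
  apply Finset.sum_lt_sum
  · intro i hi
    have hi' : i ∉ I := by simpa using hi
    by_cases hi2 : (initSeg d i).map τ.toEmbedding = initSeg d i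
    · rw [hg.pos hi', h'.pos hi']
      have : (initSeg d i).map (w * τ).toEmbedding
          = ((initSeg d i).map τ.toEmbedding).map w.toEmbedding := by
        rw [Finset.map_map]; rfl
      rw [this, hi2]
    · exact (hL i hi' hi2).le
  · exact ⟨j, by simpa using hjI, hL j hjI hj⟩

lemma mem_invFuns {G : Type*} [Group G] {P : Subgroup G} {f : G → ℤ} :
    f ∈ invFuns P ↔ ∀ g : G, ∀ h ∈ P, f (g * h) = f g := Iff.rfl

open Classical in
/-- Indicator function of the coset `gP`. -/
noncomputable def ind {G : Type*} [Group G] (P : Subgroup G) (g : G) : G → ℤ :=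
  fun h => if g⁻¹ * h ∈ P then 1 else 0

lemma ind_mem {G : Type*} [Group G] {P Q : Subgroup G} (hQ : Q ≤ P) (g : G) :
    ind P g ∈ invFuns Q := by
  intro x h hh
  simp only [ind]
  rw [← mul_assoc, Subgroup.mul_mem_cancel_right P (hQ hh)]

lemma sum_ind {G : Type*} [Group G] [Finite G] (P : Subgroup G) (f : G → ℤ) (hf : f ∈ invFuns P) :
    ∃ s : Finset G, f = ∑ g ∈ s, f g • ind P g := by
  classical
  have := Fintype.ofFinite G
  let φ : G ⧸ P → G := fun x => Quotient.out x
  have hφ : ∀ x : G ⧸ P, (QuotientGroup.mk (φ x) : G ⧸ P) = x := fun x => QuotientGroup.out_eq' x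
  have hinj : Function.Injective φ := fun x y h => by rw [← hφ x, ← hφ y, h]
  refine ⟨(Finset.univ : Finset (G ⧸ P)).image φ, ?_⟩
  rw [Finset.sum_image (fun x _ y _ h => hinj h)]
  ext h
  rw [Finset.sum_apply, Finset.sum_eq_single (QuotientGroup.mk h : G ⧸ P)]
  · have h1 : (φ (QuotientGroup.mk h : G ⧸ P))⁻¹ * h ∈ P := by
      rw [← QuotientGroup.eq, hφ]
    simp only [Pi.smul_apply, ind, h1, if_true, smul_eq_mul, mul_one]
    rw [← hf (φ (QuotientGroup.mk h : G ⧸ P)) _ h1, mul_inv_cancel_left]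
  · intro x _ hx
    have h1 : (φ x)⁻¹ * h ∉ P := by
      rw [← QuotientGroup.eq, hφ]
      exact hx
    simp [ind, h1]
  · simp

/-- The submodule generated by the pulled back functions. -/
abbrev bad (k : Type*) [Field k] {d : ℕ} (I : Set (Fin d)) :
    Submodule ℤ (GL (Fin (d + 1)) k → ℤ) :=
  Submodule.span ℤ (⋃ J ∈ {J : Set (Fin d) | I ⊂ J},
    ((invFuns (parab k d J) : Submodule ℤ (GL (Fin (d + 1)) k → ℤ)) :
      Set (GL (Fin (d + 1)) k → ℤ)))

/-- The points which carry the basis. -/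
def Full (I : Set (Fin d)) (g : GL (Fin (d + 1)) k) : Prop :=
  ∃ u w, Fac I g u w ∧ ∀ i, i ∉ I → w i.succ < w i.castSucc

lemma Full.mul {I : Set (Fin d)} {g p : GL (Fin (d + 1)) k} (hg : Full I g)
    (hp : p ∈ parab k d I) : Full I (g * p) := by
  obtain ⟨u, w, h, h'⟩ := hg
  exact ⟨u, w, ⟨h.1, by rw [← mul_assoc]; exact Subgroup.mul_mem _ h.2 hp⟩, h'⟩

/-- Functions supported on full points. -/
def fullFuns (k : Type*) [Field k] {d : ℕ} (I : Set (Fin d)) :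
    Submodule ℤ (GL (Fin (d + 1)) k → ℤ) where
  carrier := {f | f ∈ invFuns (parab k d I) ∧ ∀ g, f g ≠ 0 → Full I g}
  zero_mem' := ⟨Submodule.zero_mem _, fun g h => absurd rfl h⟩
  add_mem' := by
    rintro a b ⟨ha, ha'⟩ ⟨hb, hb'⟩
    refine ⟨Submodule.add_mem _ ha hb, fun g h => ?_⟩
    by_contra hg
    have h1 : a g = 0 := by_contra fun h1 => hg (ha' g h1)
    have h2 : b g = 0 := by_contra fun h2 => hg (hb' g h2)
    simp [h1, h2] at h
  smul_mem' := by
    rintro c a ⟨ha, ha'⟩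
    refine ⟨Submodule.smul_mem _ _ ha, fun g h => ha' g fun h1 => ?_⟩
    simp [h1] at h

lemma mem_sup_of_support [Finite k] (I : Set (Fin d)) (n : ℕ) :
    ∀ f ∈ invFuns (parab k d I), (∀ g, f g ≠ 0 → (d * ((d + 1) * d) : ℤ) < ell I g + n) →
      f ∈ bad k I ⊔ fullFuns k I := by
  classical
  induction n with
  | zero =>
    intro f _ h
    have : f = 0 := by
      ext g
      by_contra hg
      have h1 := h g hg
      have h2 := ell_le I g
      simp at h1
      linarith
    rw [this]
    exact Submodule.zero_mem _
  | succ n ih =>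
    intro f hf h
    have : Finite (GL (Fin (d + 1)) k) := inferInstance
    obtain ⟨s, hs⟩ := sum_ind _ f hf
    rw [hs]
    refine Submodule.sum_mem _ fun g _ => ?_
    by_cases hg0 : f g = 0
    · rw [hg0, zero_smul]
      exact Submodule.zero_mem _
    refine Submodule.smul_mem _ _ ?_
    have hg1 := h g hg0
    by_cases hfull : Full I g
    · refine Submodule.mem_sup_right ⟨ind_mem le_rfl g, fun x hx => ?_⟩
      have hx' : g⁻¹ * x ∈ parab k d I := by
        by_contra hne
        simp [ind, hne] at hx
      have := hfull.mul hx'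
      rwa [mul_inv_cancel_left] at this
    · obtain ⟨u, w, hfac, hw⟩ := exists_fac_sorted I g
      have hex : ∃ j, j ∉ I ∧ w j.castSucc < w j.succ := by
        by_contra hno
        push Not at hno
        refine hfull ⟨u, w, hfac, fun i hi => lt_of_le_of_ne (hno i hi) fun h => ?_⟩
        have := congrArg Fin.val (w.injective h)
        simp at this
      obtain ⟨j, hj, hwj⟩ := hex
      have hw' : ∀ i ∈ insert j I, w i.castSucc < w i.succ := by
        intro i hi
        rcases Set.mem_insert_iff.1 hi with rfl | hi
        · exact hwj
        · exact hw i hi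
      have hIJ : parab k d I ≤ parab k d (insert j I) := parab_mono (Set.subset_insert _ _)
      have e : ind (parab k d I) g = ind (parab k d (insert j I)) g -
          (ind (parab k d (insert j I)) g - ind (parab k d I) g) := by abel
      rw [e]
      refine Submodule.sub_mem _ (Submodule.mem_sup_left (Submodule.subset_span ?_)) ?_
      · simp only [Set.mem_iUnion]
        exact ⟨insert j I, Set.ssubset_insert hj, ind_mem le_rfl g⟩
      · refine ih _ (Submodule.sub_mem _ (ind_mem hIJ g) (ind_mem le_rfl g)) fun x hx => ?_
        have hx1 : g⁻¹ * x ∉ parab k d I := by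
          intro hx1
          simp [ind, hx1, hIJ hx1] at hx
        have hx2 : g⁻¹ * x ∈ parab k d (insert j I) := by
          by_contra hx2
          simp [ind, hx1, hx2] at hx
        have := ell_lt hj hfac hw' hx2 hx1
        push_cast at hg1
        linarith

open Classical in
/-- The alternating sum over an apartment. -/
noncomputable def cyc (I : Set (Fin d)) (u : GL (Fin (d + 1)) k) (w : Equiv.Perm (Fin (d + 1))) :
    (GL (Fin (d + 1)) k → ℤ) →ₗ[ℤ] ℤ :=
  ∑ τ ∈ Finset.univ.filter (fun τ : Equiv.Perm (Fin (d + 1)) =>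
      ∀ i : Fin d, i ∈ I → (initSeg d i).map τ.toEmbedding = initSeg d i),
    ((Equiv.Perm.sign τ : ℤˣ) : ℤ) • LinearMap.proj (u * pg k (w * τ))

lemma cyc_apply_eq_zero (I : Set (Fin d)) (u : GL (Fin (d + 1)) k)
    (w : Equiv.Perm (Fin (d + 1))) (f : GL (Fin (d + 1)) k → ℤ) (hf : f ∈ bad k I) :
    cyc I u w f = 0 := by
  classical
  suffices h : bad k I ≤ LinearMap.ker (cyc I u w) from h hf
  refine Submodule.span_le.2 ?_
  intro f hf
  simp only [Set.mem_iUnion] at hf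
  obtain ⟨J, hIJ, hf⟩ := hf
  obtain ⟨j, hjJ, hjI⟩ := Set.exists_of_ssubset hIJ
  change cyc I u w f = 0
  set s := Equiv.swap j.castSucc j.succ with hs
  have hjs : j.castSucc ≠ j.succ := fun h => by
    have := congrArg Fin.val h
    simp at this
  have hsm : ∀ i : Fin d, i ∈ I → (initSeg d i).map s.toEmbedding = initSeg d i := by
    intro i hi
    ext x
    rw [Finset.mem_map_equiv, mem_initSeg, mem_initSeg, hs, Equiv.symm_swap]
    exact swap_initSeg (by rintro rfl; exact hjI hi) x
  have hsign : Equiv.Perm.sign s = -1 := Equiv.Perm.sign_swap hjs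
  simp only [cyc, LinearMap.sum_apply, LinearMap.smul_apply, LinearMap.proj_apply, smul_eq_mul]
  refine Finset.sum_involution (fun τ _ => τ * s) ?_ ?_ ?_ ?_
  · intro τ _
    have : f (u * pg k (w * (τ * s))) = f (u * pg k (w * τ)) := by
      rw [← mul_assoc w, pg_mul, ← mul_assoc]
      exact hf _ _ (swap_mem hjJ)
    rw [this, Equiv.Perm.sign_mul, hsign]
    simp
  · intro τ _ _ h
    have h1 : s = 1 := by simpa using h
    rw [h1] at hsign
    simp at hsign
  · intro τ hτ
    simp only [Finset.mem_filter, Finset.mem_univ, true_and] at hτ ⊢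
    intro i hi
    have : (initSeg d i).map (τ * s).toEmbedding
        = ((initSeg d i).map s.toEmbedding).map τ.toEmbedding := by
      rw [Finset.map_map]; rfl
    rw [this, hsm i hi, hτ i hi]
  · intro τ _
    rw [mul_assoc, hs, Equiv.swap_mul_self, mul_one]

lemma full_eq_zero (I : Set (Fin d)) (f : GL (Fin (d + 1)) k → ℤ) (hf : f ∈ fullFuns k I)
    (hcyc : ∀ u w, cyc I u w f = 0) : f = 0 := by
  classical
  have key : ∀ n : ℕ, ∀ g, ell I g = n → f g = 0 := by
    intro n
    induction n using Nat.strong_induction_on with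
    | _ n ih =>
      intro g hgn
      by_contra hg
      obtain ⟨u, w, hfac, hw⟩ := hf.2 g hg
      have h0 := hcyc u w
      simp only [cyc, LinearMap.sum_apply, LinearMap.smul_apply, LinearMap.proj_apply,
        smul_eq_mul] at h0
      rw [Finset.sum_eq_single 1] at h0
      · have h1 : f g = f (u * pg k w) := by
          rw [← hf.1 (u * pg k w) _ hfac.2, mul_inv_cancel_left]
        simp at h0
        exact hg (h1.trans h0)
      · intro τ hτ hτ1
        have hlt := ell_gt hfac hw (by simpa using hτ) hτ1
        have hnn := ell_nonneg I (u * pg k (w * τ))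
        rw [ih (ell I (u * pg k (w * τ))).toNat (by omega) _ (by omega), mul_zero]
      · intro h
        refine absurd (Finset.mem_filter.2 ⟨Finset.mem_univ _, fun i _ => ?_⟩) h
        exact Finset.map_refl
  ext g
  exact key (ell I g).toNat g (by have := ell_nonneg I g; omega)

lemma mem_bad_of_smul [Finite k] (I : Set (Fin d)) (f : GL (Fin (d + 1)) k → ℤ)
    (hf : f ∈ invFuns (parab k d I)) (n : ℤ) (hn : n ≠ 0) (h : n • f ∈ bad k I) :
    f ∈ bad k I := by
  have hsup := mem_sup_of_support I (d * ((d + 1) * d) + 1) f hf (fun g _ => by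
    have := ell_nonneg I g
    push_cast
    linarith)
  obtain ⟨a, ha, b, hb, rfl⟩ := Submodule.mem_sup.1 hsup
  have hb0 : b = 0 := by
    apply full_eq_zero I b hb
    intro u w
    have h1 := cyc_apply_eq_zero I u w _ h
    rw [map_smul, map_add, cyc_apply_eq_zero I u w a ha, zero_add, smul_eq_mul] at h1
    exact (mul_eq_zero.1 h1).resolve_left hn
  rw [hb0, add_zero]
  exact ha

end SteinbergAux

/-- Let `k` be a finite field, `d ≥ 1`, `G = GL_{d+1}(k)` and, for a proper
subset `I ⊊ Δ = {0,…,d−1}`, let `v_{P_I}^G(ℤ)` be the integral generalized Steinberg module: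
the quotient of the module of `ℤ`-valued functions on `G⧸P_I` (realized as `P_I`-invariant
functions on `G`) by the submodule generated by the functions pulled back from `G⧸P_J` for
all `J` with `I ⊊ J ⊆ Δ` (realized as the `P_J`-invariant functions, for `P_I ≤ P_J`).
Then `v_{P_I}^G(ℤ)` is a finitely generated free `ℤ`-module. -/
theorem steinberg_free_and_finite (k : Type*) [Field k] [Fintype k]
    (d : ℕ) (hd : 1 ≤ d) (I : Set (Fin d)) (hI : I ≠ Set.univ) :
    Module.Free ℤ
      ((invFuns (parab k d I)) ⧸
        (Submodule.comap (invFuns (parab k d I)).subtype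
          (Submodule.span ℤ (⋃ J ∈ {J : Set (Fin d) | I ⊂ J},
            ((invFuns (parab k d J) : Submodule ℤ (GL (Fin (d + 1)) k → ℤ)) :
              Set (GL (Fin (d + 1)) k → ℤ)))))) ∧
    Module.Finite ℤ
      ((invFuns (parab k d I)) ⧸
        (Submodule.comap (invFuns (parab k d I)).subtype
          (Submodule.span ℤ (⋃ J ∈ {J : Set (Fin d) | I ⊂ J},
            ((invFuns (parab k d J) : Submodule ℤ (GL (Fin (d + 1)) k → ℤ)) :
              Set (GL (Fin (d + 1)) k → ℤ)))))) := by
  have hfin : Module.Finite ℤ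
      ((invFuns (parab k d I)) ⧸
        (Submodule.comap (invFuns (parab k d I)).subtype (SteinbergAux.bad k I))) := by
    have : Module.Finite ℤ (invFuns (parab k d I)) := inferInstance
    infer_instance
  have htf : Module.IsTorsionFree ℤ
      ((invFuns (parab k d I)) ⧸
        (Submodule.comap (invFuns (parab k d I)).subtype (SteinbergAux.bad k I))) := by
    refine ⟨fun n hn => ?_⟩
    refine IsSMulRegular.of_right_eq_zero_of_smul ?_
    intro x hx
    obtain ⟨f, rfl⟩ := Submodule.Quotient.mk_surjective _ x
    rw [← Submodule.Quotient.mk_smul, Submodule.Quotient.mk_eq_zero] at hx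
    rw [Submodule.Quotient.mk_eq_zero]
    exact SteinbergAux.mem_bad_of_smul I f.1 f.2 n hn.ne_zero hx
  exact ⟨Module.free_of_finite_type_torsion_free', hfin⟩
end

section
/- Let k be a perfect field of characteristic p > 0 and A a smooth k-algebra, with universal derivation d : A → Ω¹_{A/k} into the module of Kähler differentials. Let n ≥ 2 and a₁,…,a_{n−1} ∈ A. Then there exists b ∈ A with Σ_{i=1}^{n−1} a_i^{p^{n−i}−1}·d a_i = d b if and only if d a_i = 0 for every 1 ≤ i ≤ n−1. -/
open Polynomial TensorProduct in
theorem aux_isReduced (k A : Type*) [Field k] [CommRing A] [Algebra k A] [Algebra.Smooth k A] :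
    IsReduced A := by
  rw [isReduced_iff_pow_one_lt 2 one_lt_two]
  intro x hx
  have hint : IsIntegral A (x ⊗ₜ[k] (X : k[X])) := by
    refine IsIntegral.of_pow (n := 2) two_pos ?_
    rw [Algebra.TensorProduct.tmul_pow, hx, zero_tmul]
    exact isIntegral_zero
  obtain ⟨z, hz⟩ := (TensorProduct.toIntegralClosure_bijective_of_smooth
    (R := k) (S := A) (B := k[X])).2 ⟨_, hint⟩
  have hz' := congrArg Subtype.val hz
  let φ : A ⊗[k] k[X] →ₗ[k] A :=
    (TensorProduct.rid k A).toLinearMap ∘ₗ LinearMap.lTensor A (Polynomial.lcoeff k 1)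
  have h0 : ∀ z : A ⊗[k] integralClosure k k[X],
      φ (TensorProduct.toIntegralClosure k A k[X] z).val = 0 := by
    intro z
    induction z with
    | zero => simp
    | add x y hx hy => rw [map_add, Subalgebra.coe_add, map_add, hx, hy, add_zero]
    | tmul a y =>
      obtain ⟨y, q, hq, hy⟩ := y
      have hc : q.comp y = 0 := by
        rw [← hy]; rfl
      have hd : y.natDegree = 0 := by
        have h1 : q.natDegree * y.natDegree = 0 := by
          rw [← natDegree_comp, hc, natDegree_zero]
        rcases Nat.mul_eq_zero.1 h1 with h | h
        · rw [hq.natDegree_eq_zero.1 h] at hc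
          simp at hc
        · exact h
      have : y.coeff 1 = 0 := coeff_eq_zero_of_natDegree_lt (by omega)
      simp [φ, TensorProduct.toIntegralClosure, this]
  have := h0 z
  rw [hz'] at this
  simpa [φ] using this

theorem aux_leibniz {k A : Type*} [CommRing k] [CommRing A] [Algebra k A]
    (D : Derivation k A A) (n : ℕ) (a b : A) :
    D^[n] (a * b) = ∑ ij ∈ Finset.HasAntidiagonal.antidiagonal n,
      (n.choose ij.1 : A) * (D^[ij.1] a * D^[ij.2] b) := by
  induction n with
  | zero => simp
  | succ n ih =>
    rw [Finset.sum_antidiagonal_choose_succ_mul (fun i j => D^[i] a * D^[j] b) n,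
      Function.iterate_succ_apply', ih, map_sum, ← Finset.sum_add_distrib]
    refine Finset.sum_congr rfl fun ij h => ?_
    have h' : n.choose ij.2 = n.choose ij.1 :=
      (Nat.choose_symm_of_eq_add (Finset.HasAntidiagonal.mem_antidiagonal.1 h).symm).symm
    simp only [Function.iterate_succ_apply', Derivation.leibniz, smul_eq_mul,
      Derivation.map_natCast, h']
    ring

open Polynomial in
theorem aux_coeff (p : ℕ) [hp : Fact p.Prime] {A : Type*} [CommRing A] [CharP A p] (G : A[X]) :
    (G ^ (p - 1) * derivative G).coeff (p - 1) = G.coeff 1 ^ p := by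
  have hsurj : Function.Surjective (MvPolynomial.aeval (R := ℤ) (fun a : A => a)).toRingHom :=
    fun a => ⟨MvPolynomial.X a, by simp⟩
  obtain ⟨H, rfl⟩ := Polynomial.map_surjective _ hsurj G
  have hp1 : p - 1 + 1 = p := Nat.sub_add_cancel hp.out.one_le
  have key : (H ^ (p - 1) * derivative H).coeff (p - 1) = (H ^ p).coeff p := by
    have h1 : (derivative (H ^ p)).coeff (p - 1) = (H ^ p).coeff p * p := by
      rw [coeff_derivative, hp1]
      congr 1
      exact_mod_cast congrArg (Nat.cast (R := MvPolynomial A ℤ)) hp1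
    rw [derivative_pow, mul_assoc, coeff_C_mul, mul_comm] at h1
    exact mul_right_cancel₀ (by exact_mod_cast hp.out.ne_zero) h1
  rw [derivative_map, ← Polynomial.map_pow, ← Polynomial.map_mul, coeff_map, key, ← coeff_map,
    Polynomial.map_pow]
  set G := H.map (MvPolynomial.aeval (R := ℤ) (fun a : A => a)).toRingHom
  rw [← Polynomial.map_frobenius_expand, coeff_map]
  have := coeff_expand_mul hp.out.pos G 1
  rw [one_mul] at this
  rw [this, frobenius_def]

open Polynomial in
/-- `P` represents `a` up to order `p`. -/
def AuxRep {k A : Type*} [CommRing k] [CommRing A] [Algebra k A]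
    (D : Derivation k A A) (p : ℕ) (P : A[X]) (a : A) : Prop :=
  ∀ i < p, (i.factorial : A) * P.coeff i = D^[i] a

open Polynomial in
theorem AuxRep.mul {k A : Type*} [CommRing k] [CommRing A] [Algebra k A]
    {D : Derivation k A A} {p : ℕ} {P Q : A[X]} {a b : A}
    (hP : AuxRep D p P a) (hQ : AuxRep D p Q b) : AuxRep D p (P * Q) (a * b) := by
  intro n hn
  rw [aux_leibniz, coeff_mul, Finset.mul_sum]
  refine Finset.sum_congr rfl fun ij h => ?_
  have h' := Finset.HasAntidiagonal.mem_antidiagonal.1 h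
  rw [← hP _ (by omega), ← hQ _ (by omega), ← h',
    ← Nat.add_choose_mul_factorial_mul_factorial ij.1 ij.2,
    Nat.choose_symm_add]
  push_cast
  ring

open Polynomial in
theorem AuxRep.pow {k A : Type*} [CommRing k] [CommRing A] [Algebra k A]
    {D : Derivation k A A} {p : ℕ} {P : A[X]} {a : A}
    (hP : AuxRep D p P a) (n : ℕ) : AuxRep D p (P ^ n) (a ^ n) := by
  induction n with
  | zero =>
    intro i hi
    rcases i with _ | i
    · simp
    · simp [coeff_one, Function.iterate_succ_apply]
  | succ n ih => rw [pow_succ, pow_succ]; exact ih.mul hP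

open Polynomial in
theorem aux_hochschild (p : ℕ) [hp : Fact p.Prime] {k A : Type*} [Field k] [CharP k p]
    [CommRing A] [Algebra k A] [CharP A p] (D : Derivation k A A) (g : A) :
    D^[p - 1] (g ^ (p - 1) * D g) = g ^ (p - 1) * D^[p] g - D g ^ p := by
  have hp1 : p - 1 + 1 = p := Nat.sub_add_cancel hp.out.one_le
  have hinv : ∀ i < p, (i.factorial : A) * algebraMap k A ((i.factorial : k)⁻¹) = 1 := by
    intro i hi
    have : (i.factorial : k) ≠ 0 := by
      rw [Ne, CharP.cast_eq_zero_iff k p, hp.out.dvd_factorial]; omega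
    rw [← map_natCast (algebraMap k A), ← map_mul, mul_inv_cancel₀ this, map_one]
  let G : A[X] := ∑ i ∈ Finset.range p,
    monomial i (algebraMap k A ((i.factorial : k)⁻¹) * D^[i] g)
  have hGc : ∀ i, G.coeff i =
      if i < p then algebraMap k A ((i.factorial : k)⁻¹) * D^[i] g else 0 := by
    intro i
    simp [G, coeff_monomial]
  have hG : AuxRep D p G g := by
    intro i hi
    rw [hGc, if_pos hi, ← mul_assoc, hinv i hi, one_mul]
  let c : A := algebraMap k A (((p - 1).factorial : k)⁻¹)
  have hH : AuxRep D p (derivative G + monomial (p - 1) (c * D^[p] g)) (D g) := by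
    intro i hi
    rw [coeff_add, coeff_derivative, coeff_monomial, ← Function.iterate_succ_apply]
    rcases eq_or_ne (p - 1) i with h | h
    · subst h
      rw [hGc, if_neg (by omega), if_pos rfl, zero_mul, zero_add, ← mul_assoc,
        hinv _ hi, one_mul, Nat.succ_eq_add_one, hp1]
    · rw [if_neg h, add_zero, ← hG (i + 1) (by omega), Nat.factorial_succ]
      push_cast
      ring
  have h := (hG.pow (p - 1)).mul hH (p - 1) (by omega)
  have hcm : ∀ (P : A[X]) (r : A), (P * monomial (p - 1) r).coeff (p - 1) = P.coeff 0 * r := by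
    intro P r
    have := coeff_mul_monomial P (p - 1) 0 r
    rwa [zero_add] at this
  rw [← h, mul_add, coeff_add, aux_coeff, hGc 1, if_pos hp.out.one_lt,
    hcm, coeff_zero_eq_eval_zero, eval_pow,
    ← coeff_zero_eq_eval_zero, hGc 0, if_pos hp.out.pos]
  have hw : ((p - 1).factorial : A) = -1 := by
    have := congrArg (ZMod.castHom dvd_rfl A) (ZMod.wilsons_lemma p)
    rwa [map_natCast, map_neg, map_one] at this
  have hc : ((p - 1).factorial : A) * c = 1 := hinv _ (by omega)
  simp only [Nat.factorial, Nat.cast_one, inv_one, map_one, one_mul, Function.iterate_zero, id,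
    Function.iterate_one, mul_one]
  rw [mul_add, hw]
  rw [hw] at hc
  linear_combination (g ^ (p - 1) * D^[p] g) * hc

theorem aux_iterate_pow_mul (p : ℕ) {k A : Type*} [CommRing k]
    [CommRing A] [Algebra k A] [CharP A p] (D : Derivation k A A) (n : ℕ) (f x : A) :
    D^[n] (f ^ p * x) = f ^ p * D^[n] x := by
  induction n with
  | zero => rfl
  | succ n ih =>
    rw [Function.iterate_succ_apply', ih, Function.iterate_succ_apply', Derivation.leibniz,
      Derivation.leibniz_pow]
    simp

/-- The `p`-th power of a derivation in characteristic `p`. -/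
noncomputable def auxPow (p : ℕ) [hp : Fact p.Prime] {k A : Type*} [CommRing k]
    [CommRing A] [Algebra k A] [CharP A p] (D : Derivation k A A) : Derivation k A A :=
  Derivation.mk' ((D : A →ₗ[k] A) ^ p) fun a b => by
    rw [Module.End.pow_apply, Module.End.pow_apply, Module.End.pow_apply]
    change D^[p] (a * b) = a * D^[p] b + b * D^[p] a
    rw [aux_leibniz]
    have hne : ((0, p) : ℕ × ℕ) ≠ (p, 0) := fun h => hp.out.ne_zero (congrArg Prod.snd h)
    rw [Finset.sum_eq_add (0, p) (p, 0) hne]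
    · simp [mul_comm]
    · rintro ⟨i, j⟩ hij ⟨h1, h2⟩
      have hij' := Finset.HasAntidiagonal.mem_antidiagonal.1 hij
      simp only at hij'
      have : p ∣ p.choose i := by
        refine hp.out.dvd_choose_self ?_ ?_
        · rintro rfl
          apply h1; ext <;> simp; omega
        · by_contra hh
          apply h2; ext <;> simp <;> omega
      simp [(CharP.cast_eq_zero_iff A p _).2 this]
    · intro h; simp at h
    · intro h; simp at h

theorem auxPow_apply (p : ℕ) [hp : Fact p.Prime] {k A : Type*} [CommRing k]
    [CommRing A] [Algebra k A] [CharP A p] (D : Derivation k A A) (a : A) :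
    auxPow p D a = D^[p] a := by
  change ((D : A →ₗ[k] A) ^ p) a = _
  rw [Module.End.pow_apply]; rfl

/-- Injectivity of the inverse Cartier operator. -/
theorem aux_key (p : ℕ) [hp : Fact p.Prime] {k A : Type*} [Field k] [CharP k p]
    [CommRing A] [Algebra k A] [CharP A p] [Algebra.Smooth k A]
    {ι : Type*} [Fintype ι] (f g : ι → A) (b : A)
    (h : ∑ i, (f i ^ p * g i ^ (p - 1)) • KaehlerDifferential.D k A (g i) =
      KaehlerDifferential.D k A b) :
    ∑ i, f i • KaehlerDifferential.D k A (g i) = 0 := by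
  have := aux_isReduced k A
  have hp1 : p - 1 + 1 = p := Nat.sub_add_cancel hp.out.one_le
  rw [← Module.forall_dual_apply_eq_zero_iff A]
  intro φ
  let D : Derivation k A A := φ.compDer (KaehlerDifferential.D k A)
  have hD : ∀ E : Derivation k A A, ∑ i, f i ^ p * g i ^ (p - 1) * E (g i) = E b := by
    intro E
    have := congrArg E.liftKaehlerDifferential h
    simpa [map_sum] using this
  have e1 := congrArg D^[p - 1] (hD D)
  have e2 := hD (auxPow p D)
  rw [← Function.iterate_succ_apply, Nat.succ_eq_add_one, hp1] at e1
  rw [auxPow_apply, ← e1] at e2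
  have hsum : D^[p - 1] (∑ i, f i ^ p * g i ^ (p - 1) * D (g i)) =
      ∑ i, D^[p - 1] (f i ^ p * g i ^ (p - 1) * D (g i)) := by
    have := map_sum ((D : A →ₗ[k] A) ^ (p - 1))
      (fun i => f i ^ p * g i ^ (p - 1) * D (g i)) Finset.univ
    simp only [Module.End.pow_apply] at this
    exact this
  rw [hsum] at e2
  simp only [mul_assoc, aux_iterate_pow_mul, aux_hochschild, auxPow_apply, mul_sub,
    Finset.sum_sub_distrib] at e2
  have e3 : (∑ i, f i * D (g i)) ^ p = 0 := by
    rw [sum_pow_char]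
    simp only [mul_pow]
    linear_combination e2
  have e4 := pow_eq_zero_iff hp.out.ne_zero |>.1 e3
  simpa [map_sum, D] using e4

theorem aux_main (p : ℕ) [hp : Fact p.Prime] {k A : Type*} [Field k] [CharP k p]
    [CommRing A] [Algebra k A] [CharP A p] [Algebra.Smooth k A] (m : ℕ) (a : Fin m → A) (b : A)
    (h : ∑ j : Fin m, a j ^ (p ^ (m - (j : ℕ)) - 1) • KaehlerDifferential.D k A (a j) =
      KaehlerDifferential.D k A b) :
    ∀ j, KaehlerDifferential.D k A (a j) = 0 := by
  induction m generalizing b with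
  | zero => exact fun j => j.elim0
  | succ m ih =>
    have h2 := aux_key p (k := k) (fun j : Fin (m + 1) => a j ^ (p ^ (m - (j : ℕ)) - 1)) a b (by
      rw [← h]
      refine Finset.sum_congr rfl fun j _ => ?_
      have hj : m + 1 - (j : ℕ) = m - j + 1 := by omega
      rw [hj, ← pow_mul, ← pow_add, pow_succ]
      congr 2
      have h1 : 1 ≤ p ^ (m - (j : ℕ)) := Nat.one_le_pow _ _ hp.out.pos
      have h3 := hp.out.one_le
      obtain ⟨x, hx⟩ := Nat.exists_eq_add_of_le' h1
      obtain ⟨y, hy⟩ := Nat.exists_eq_add_of_le' h3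
      rw [hx, hy]
      have : (x + 1) * (y + 1) = x * (y + 1) + y + 1 := by ring
      rw [this]
      simp)
    rw [Fin.sum_univ_castSucc] at h2
    simp only [Fin.val_last, Nat.sub_self, pow_zero, one_smul, Fin.val_castSucc] at h2
    have h3 := ih (fun j => a j.castSucc) (-a (Fin.last m)) (by
      rw [Derivation.map_neg]; exact eq_neg_of_add_eq_zero_left h2)
    intro j
    refine Fin.lastCases ?_ h3 j
    simpa [h3] using h2

universe u

/-- Let `k` be a perfect field of characteristic `p > 0` and `A` a smooth
`k`-algebra with universal derivation `d : A → Ω¹_{A/k}`.  For `n ≥ 2` and elements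
`a₁, …, a_{n-1} ∈ A` (indexed here by `j : Fin (n-1)`, with `aᵢ = a ⟨i-1⟩` so that the `i`-th
exponent is `p^{n-i} - 1 = p^{n-1-j} - 1`), the 1-form `∑ᵢ aᵢ^{p^{n-i}-1} d aᵢ` is exact
if and only if `d aᵢ = 0` for every `i`. -/
theorem sum_pow_smul_d_exact_iff (p : ℕ) [Fact p.Prime]
    (k : Type u) [Field k] [CharP k p] [PerfectRing k p]
    (A : Type u) [CommRing A] [Algebra k A]
    [Algebra.FormallySmooth k A] [Algebra.FinitePresentation k A]
    (n : ℕ) (hn : 2 ≤ n) (a : Fin (n - 1) → A) :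
    (∃ b : A,
        (∑ j : Fin (n - 1),
            a j ^ (p ^ (n - 1 - (j : ℕ)) - 1) • KaehlerDifferential.D k A (a j)) =
          KaehlerDifferential.D k A b) ↔
      ∀ j : Fin (n - 1), KaehlerDifferential.D k A (a j) = 0 := by

  constructor
  · rintro ⟨b, hb⟩
    rcases subsingleton_or_nontrivial A with hA | hA
    · intro j
      rw [Subsingleton.elim (a j) 0, map_zero]
    · have : CharP A p := charP_of_injective_algebraMap (algebraMap k A).injective p
      have : Algebra.Smooth k A := ⟨inferInstance, inferInstance⟩
      exact aux_main p (n - 1) a b hb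
  · intro h
    exact ⟨0, by simp [h]⟩
end
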